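/- Under the stated assumptions, the normalized random variable (Y_N − μ log N)/(σ √(log N)) converges in distribution, as N → ∞, to the standard normal distribution 𝒩(0,1); that is, for every real x, P(Y_N ≤ μ log N + x σ √(log N)) → (1/√(2π)) ∫_{−∞}^{x} e^{−t²/2} dt as N → ∞. -/

import Mathlib

open scoped BigOperators ENNReal
open Filter Asymptotics

noncomputable section

/-- `af P m n` is the number of ordered `m`-tuples `(n₁,…,n_m)` of elements of `P`
with product `n` (so `af P 0 n = 1` iff `n = 1`). -/
def af (P : Set ℕ) (m n : ℕ) : ℕ :=
  Nat.card {t : Fin m → ℕ // (∀ i, t i ∈ P) ∧ ∏ i, t i = n}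

/-- `aTot P n = a(n) = Σ_{m ≥ 0} a_m(n)`. -/
def aTot (P : Set ℕ) (n : ℕ) : ℝ := ∑' m : ℕ, (af P m n : ℝ)

/-- `Acum P N = A(N) = Σ_{1 ≤ n ≤ N} a(n)`. -/
def Acum (P : Set ℕ) (N : ℕ) : ℝ := ∑ n ∈ Finset.Icc 1 N, aTot P n

/-- The Dirichlet series `𝒫(x) = Σ_{n ∈ 𝒫} n^{-x}` at a real point. -/
def Pval (P : Set ℕ) (x : ℝ) : ℝ := ∑' n : P, ((n : ℕ) : ℝ) ^ (-x)

/-- `𝒫'(x) = -Σ_{n ∈ 𝒫} n^{-x} log n`. -/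
def Pderiv1 (P : Set ℕ) (x : ℝ) : ℝ := -∑' n : P, ((n : ℕ) : ℝ) ^ (-x) * Real.log (n : ℕ)

/-- `𝒫''(x) = Σ_{n ∈ 𝒫} n^{-x} (log n)^2`. -/
def Pderiv2 (P : Set ℕ) (x : ℝ) : ℝ := ∑' n : P, ((n : ℕ) : ℝ) ^ (-x) * (Real.log (n : ℕ)) ^ 2

/-- The abscissa of convergence `κ` of the Dirichlet series of `P`, as an extended real
(`⊥` when `P` is finite). -/
def kappa (P : Set ℕ) : EReal :=
  sInf {x : EReal | ∃ r : ℝ, x = (r : EReal) ∧ Summable (fun n : P => ((n : ℕ) : ℝ) ^ (-r))}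

open Classical in
/-- The (possibly infinite) value `𝒫(x) ∈ (0,∞]` of the Dirichlet series at an
extended-real point; at `x = -∞` every term `n^{-x}` is infinite. -/
def PvalE (P : Set ℕ) (x : EReal) : ℝ≥0∞ :=
  if x = ⊥ then ⊤ else ∑' n : P, ENNReal.ofReal (((n : ℕ) : ℝ) ^ (-x.toReal))

section

open MeasureTheory Topology in
lemma renewal_limsup (lam : Measure ℝ) [IsProbabilityMeasure lam] (D e : ℝ → ℝ) (C K x0 : ℝ)
    (hDm : Measurable D) (hDC : ∀ y, |D y| ≤ C) (he : Tendsto e atTop (𝓝 0))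
    (hD : ∀ y, D y = e y + ∫ x, D (y - x) ∂lam)
    (hx0 : 0 < lam.real {x0})
    (hK : ∀ (J : ℕ) (y : ℝ), ∑ j ∈ Finset.range J, D (y - j * x0) ≤ K) :
    ∀ ε > 0, ∀ᶠ y in atTop, D y < ε := by
  have hC0 : 0 ≤ C := (abs_nonneg _).trans (hDC 0)
  set Dp : ℝ → ℝ := fun y => sSup (D '' Set.Ici y) with hDp
  have hbdd : ∀ y, BddAbove (D '' Set.Ici y) := by
    intro y; refine ⟨C, ?_⟩; rintro _ ⟨z, -, rfl⟩; exact (abs_le.1 (hDC z)).2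
  have hne : ∀ y, (D '' Set.Ici y).Nonempty := fun y => ⟨D y, y, Set.self_mem_Ici, rfl⟩
  have hle : ∀ y, D y ≤ Dp y := fun y => le_csSup (hbdd y) ⟨y, Set.self_mem_Ici, rfl⟩
  have hanti : Antitone Dp := by
    intro a b hab
    exact csSup_le_csSup (hbdd a) (hne b) (Set.image_mono (Set.Ici_subset_Ici.2 hab))
  have hDpC : ∀ y, |Dp y| ≤ C := by
    intro y
    rw [abs_le]
    refine ⟨(abs_le.1 (hDC y)).1.trans (hle y), csSup_le (hne y) ?_⟩
    rintro _ ⟨z, -, rfl⟩; exact (abs_le.1 (hDC z)).2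
  have hDpm : Measurable Dp := hanti.measurable
  set α := ⨅ y, Dp y with hα
  have hlim : Tendsto Dp atTop (𝓝 α) := by
    refine tendsto_atTop_ciInf hanti ⟨-C, ?_⟩
    rintro _ ⟨z, rfl⟩; exact (abs_le.1 (hDpC z)).1
  have hαle : ∀ y, α ≤ Dp y := by
    intro y
    refine ciInf_le ⟨-C, ?_⟩ y
    rintro _ ⟨z, rfl⟩; exact (abs_le.1 (hDpC z)).1
  have hI : Tendsto (fun y => ∫ x, Dp (y - x) ∂lam) atTop (𝓝 α) := by
    have : α = ∫ x, α ∂lam := by simp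
    rw [this]
    refine tendsto_integral_filter_of_dominated_convergence (fun _ => C) ?_ ?_ (by simp) ?_
    · exact Eventually.of_forall fun y => (hDpm.comp (by fun_prop)).aestronglyMeasurable
    · exact Eventually.of_forall fun y => Eventually.of_forall fun x => hDpC _
    · refine Eventually.of_forall fun x => hlim.comp ?_
      exact tendsto_atTop_add_const_right atTop (-x) tendsto_id
  have hintD : ∀ y, Integrable (fun x => D (y - x)) lam := fun y =>
    Integrable.of_bound (hDm.comp (by fun_prop)).aestronglyMeasurable C
      (Eventually.of_forall fun x => hDC _)
  have hintDp : ∀ y, Integrable (fun x => Dp (y - x)) lam := fun y =>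
    Integrable.of_bound (hDpm.comp (by fun_prop)).aestronglyMeasurable C
      (Eventually.of_forall fun x => hDpC _)
  set p := lam.real {x0} with hp
  have key : ∀ y, Dp (y - x0) - ((∫ x, Dp (y - x) ∂lam) - D y + e y) / p ≤ D (y - x0) := by
    intro y
    have h1 : ∫ x in {x0}, (Dp (y - x) - D (y - x)) ∂lam ≤ ∫ x, (Dp (y - x) - D (y - x)) ∂lam := by
      refine setIntegral_le_integral ((hintDp y).sub (hintD y)) ?_
      exact Eventually.of_forall fun x => sub_nonneg.2 (hle _)
    rw [integral_singleton, integral_sub (hintDp y) (hintD y), smul_eq_mul] at h1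
    have h2 := hD y
    have : (Dp (y - x0) - D (y - x0)) ≤ ((∫ x, Dp (y - x) ∂lam) - D y + e y) / p := by
      rw [le_div_iff₀ hx0]
      linarith
    linarith
  have step : ∀ Y : ℕ → ℝ, Tendsto Y atTop atTop → Tendsto (fun n => D (Y n)) atTop (𝓝 α) →
      Tendsto (fun n => D (Y n - x0)) atTop (𝓝 α) := by
    intro Y hY hDY
    have hY' : Tendsto (fun n => Y n - x0) atTop atTop :=
      tendsto_atTop_add_const_right atTop (-x0) hY
    refine tendsto_of_tendsto_of_tendsto_of_le_of_le ?_ (hlim.comp hY') (fun n => key (Y n))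
      (fun n => hle _)
    have := (hlim.comp hY').sub ((((hI.comp hY).sub hDY).add (he.comp hY)).div_const p)
    simpa using this
  obtain ⟨Y, hY, hDY⟩ : ∃ Y : ℕ → ℝ, Tendsto Y atTop atTop ∧
      Tendsto (fun n => D (Y n)) atTop (𝓝 α) := by
    have : ∀ n : ℕ, ∃ y : ℝ, (n : ℝ) ≤ y ∧ α - 1 / ((n : ℝ) + 1) < D y := by
      intro n
      have hlt : α - 1 / ((n : ℝ) + 1) < Dp n := by
        have : 0 < 1 / ((n : ℝ) + 1) := by positivity
        linarith [hαle n]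
      obtain ⟨_, ⟨y, hy, rfl⟩, h⟩ := exists_lt_of_lt_csSup (hne n) hlt
      exact ⟨y, hy, h⟩
    choose Y hY1 hY2 using this
    have hYt : Tendsto Y atTop atTop := tendsto_atTop_mono hY1 tendsto_natCast_atTop_atTop
    refine ⟨Y, hYt, ?_⟩
    refine tendsto_of_tendsto_of_tendsto_of_le_of_le ?_ (hlim.comp hYt) (fun n => (hY2 n).le)
      (fun n => hle _)
    simpa using (tendsto_const_nhds (x := α)).sub tendsto_one_div_add_atTop_nhds_zero_nat
  have iter : ∀ j : ℕ, Tendsto (fun n => D (Y n - j * x0)) atTop (𝓝 α) := by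
    intro j
    induction j with
    | zero => simpa using hDY
    | succ j ih =>
      have := step (fun n => Y n - j * x0) (tendsto_atTop_add_const_right atTop (-(j * x0)) hY) ih
      refine this.congr fun n => ?_
      congr 1; push_cast; ring
  have hJ : ∀ J : ℕ, J * α ≤ K := by
    intro J
    have h1 : Tendsto (fun n => ∑ j ∈ Finset.range J, D (Y n - j * x0)) atTop
        (𝓝 (∑ j ∈ Finset.range J, α)) := tendsto_finsetSum _ fun j _ => iter j
    have := le_of_tendsto' h1 (fun n => hK J (Y n))
    simpa using this
  have hα0 : α ≤ 0 := by
    by_contra! h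
    obtain ⟨J, hJ'⟩ := exists_nat_gt (K / α)
    rw [div_lt_iff₀ h] at hJ'
    linarith [hJ J]
  intro ε hε
  have : ∀ᶠ y in atTop, Dp y < ε := hlim.eventually_lt_const (by linarith)
  filter_upwards [this] with y hy
  exact (hle y).trans_lt hy

end

section

open MeasureTheory Topology

structure Ren (lam : Measure ℝ) (h : ℝ → ℝ) (ρ C : ℝ) : Prop where
  rho : 0 < ρ
  meas : Measurable h
  nonneg : ∀ y, 0 ≤ h y
  le : ∀ y, h y ≤ C
  neg : ∀ y < 0, h y = 0
  eqn : ∀ y, h y = (if 0 ≤ y then Real.exp (-ρ * y) else 0) + ∫ x, h (y - x) ∂lam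
  mono : ∀ y δ, 0 ≤ δ → Real.exp (-ρ * δ) * h y ≤ h (y + δ)
  pos : ∀ᵐ x ∂lam, 0 < x
  int : Integrable (fun x => x) lam

lemma tendsto_g {ρ : ℝ} (hρ : 0 < ρ) :
    Tendsto (fun y : ℝ => if 0 ≤ y then Real.exp (-ρ * y) else 0) atTop (𝓝 0) := by
  have : Tendsto (fun y : ℝ => Real.exp (-ρ * y)) atTop (𝓝 0) := by
    refine Real.tendsto_exp_atBot.comp ?_
    exact Tendsto.const_mul_atTop_of_neg (by linarith) tendsto_id
  refine this.congr' ?_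
  filter_upwards [eventually_ge_atTop 0] with y hy
  simp [hy]

lemma tendsto_sub_c (x : ℝ) : Tendsto (fun y : ℝ => y - x) atTop atTop :=
  tendsto_atTop_add_const_right atTop (-x) tendsto_id

lemma Ren.intble {lam : Measure ℝ} [IsProbabilityMeasure lam] {h : ℝ → ℝ} {ρ C : ℝ}
    (H : Ren lam h ρ C) (y : ℝ) : Integrable (fun x => h (y - x)) lam :=
  Integrable.of_bound (H.meas.comp (by fun_prop)).aestronglyMeasurable C
      (Eventually.of_forall fun x => by
        rw [Real.norm_of_nonneg (H.nonneg _)]; exact H.le _)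

lemma Ren.atom {lam : Measure ℝ} [IsProbabilityMeasure lam] {h : ℝ → ℝ} {ρ C : ℝ}
    (H : Ren lam h ρ C) {x0 : ℝ} (hx0 : 0 < lam.real {x0}) :
    Tendsto (fun y => h (y - x0) - h y) atTop (𝓝 0) := by
  have hm := H.meas
  have he : Tendsto (fun y : ℝ => (if 0 ≤ y then Real.exp (-ρ * y) else 0) -
      (if 0 ≤ y - x0 then Real.exp (-ρ * (y - x0)) else 0)) atTop (𝓝 0) := by
    simpa using (tendsto_g H.rho).sub ((tendsto_g H.rho).comp (tendsto_sub_c x0))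
  have hb : ∀ y, |h y - h (y - x0)| ≤ C := by
    intro y
    rw [abs_le]; constructor <;> linarith [H.nonneg y, H.le y, H.nonneg (y - x0), H.le (y - x0)]
  have heq : ∀ y, h y - h (y - x0) = ((if 0 ≤ y then Real.exp (-ρ * y) else 0) -
      (if 0 ≤ y - x0 then Real.exp (-ρ * (y - x0)) else 0)) +
        ∫ x, (h (y - x) - h (y - x - x0)) ∂lam := by
    intro y
    have h1 := H.eqn y
    have h2 := H.eqn (y - x0)
    have : ∀ x, y - x - x0 = y - x0 - x := fun x => by ring
    simp only [this]
    rw [integral_sub (H.intble y) (H.intble (y - x0))]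
    linarith
  have hsum : ∀ (J : ℕ) (y : ℝ), ∑ j ∈ Finset.range J, (h (y - j * x0) - h (y - j * x0 - x0)) =
      h y - h (y - J * x0) := by
    intro J y
    induction J with
    | zero => simp
    | succ J ih =>
      rw [Finset.sum_range_succ, ih]
      have : y - J * x0 - x0 = y - ((J + 1 : ℕ) : ℝ) * x0 := by push_cast; ring
      rw [this]; ring
  have h1 := renewal_limsup lam (fun y => h y - h (y - x0)) _ C C x0 (by fun_prop) hb he heq hx0
    (by intro J y; rw [hsum]; linarith [H.nonneg (y - J * x0), H.le y])
  have h2 := renewal_limsup lam (fun y => -(h y - h (y - x0))) (fun y => -((if 0 ≤ y then Real.exp (-ρ * y) else 0) -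
      (if 0 ≤ y - x0 then Real.exp (-ρ * (y - x0)) else 0))) C C x0 (by fun_prop)
    (by intro y; rw [abs_neg]; exact hb y) (by have := he.neg; rwa [neg_zero] at this)
    (by intro y; rw [integral_neg, heq y, neg_add]) hx0
    (by intro J y; rw [Finset.sum_neg_distrib, hsum]; linarith [H.nonneg y, H.le (y - J * x0)])
  rw [Metric.tendsto_nhds]
  intro ε hε
  filter_upwards [h1 ε hε, h2 ε hε] with y a b
  rw [Real.dist_eq, abs_lt]
  constructor <;> linarith

lemma Ren.group {lam : Measure ℝ} [IsProbabilityMeasure lam] {h : ℝ → ℝ} {ρ C : ℝ}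
    (H : Ren lam h ρ C) {x : ℝ} (hx : x ∈ AddSubgroup.closure {x | 0 < lam.real {x}}) :
    Tendsto (fun y => h (y - x) - h y) atTop (𝓝 0) := by
  induction hx using AddSubgroup.closure_induction with
  | mem x hx => exact H.atom hx
  | zero => simp
  | add a b _ _ ha hb =>
    have := (hb.comp (tendsto_sub_c a)).add ha
    simp only [add_zero] at this
    refine this.congr fun y => ?_
    simp only [Function.comp]
    rw [sub_sub]; ring
  | neg a _ ha =>
    have := (ha.comp (tendsto_sub_c (-a))).neg
    simp only [neg_zero] at this
    refine this.congr fun y => ?_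
    simp only [Function.comp]
    rw [show y - -a - a = y by ring]; ring

lemma Ren.dense {lam : Measure ℝ} [IsProbabilityMeasure lam] {h : ℝ → ℝ} {ρ C : ℝ}
    (H : Ren lam h ρ C)
    (hd : Dense (AddSubgroup.closure {x | 0 < lam.real {x}} : Set ℝ)) (u : ℝ) :
    Tendsto (fun y => h (y - u) - h y) atTop (𝓝 0) := by
  rw [Metric.tendsto_nhds]
  intro ε hε
  have hc : Tendsto (fun δ : ℝ => (1 - Real.exp (-ρ * δ)) * C) (𝓝[>] 0) (𝓝 0) := by
    have : Continuous (fun δ : ℝ => (1 - Real.exp (-ρ * δ)) * C) := by fun_prop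
    have := this.tendsto 0
    simp only [mul_zero, Real.exp_zero, sub_self, zero_mul] at this
    exact this.mono_left nhdsWithin_le_nhds
  obtain ⟨δ, hδ, hδ0⟩ := ((hc.eventually_lt_const (half_pos hε)).and self_mem_nhdsWithin).exists
  have hδ0 : 0 < δ := hδ0
  obtain ⟨x, hx, hxu⟩ := hd.exists_between (show u < u + δ by linarith)
  obtain ⟨x', hx', hxu'⟩ := hd.exists_between (show u - δ < u by linarith)
  have e1 := (Metric.tendsto_nhds.1 (H.group hx)) _ (half_pos hε)
  have e2 := (Metric.tendsto_nhds.1 (H.group hx')) _ (half_pos hε)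
  have low : ∀ y t, 0 ≤ t → t ≤ δ → h y - (1 - Real.exp (-ρ * δ)) * C ≤ h (y + t) := by
    intro y t ht ht'
    refine le_trans ?_ (H.mono y t ht)
    have h1 : Real.exp (-ρ * δ) ≤ Real.exp (-ρ * t) := by
      apply Real.exp_le_exp.2; nlinarith [H.rho]
    have h2 : Real.exp (-ρ * δ) ≤ 1 := by
      apply Real.exp_le_one_iff.2; nlinarith [H.rho]
    nlinarith [H.nonneg y, H.le y]
  filter_upwards [e1, e2] with y a b
  rw [Real.dist_eq, sub_zero, abs_lt] at *
  have l1 := low (y - x) (x - u) (by linarith [hxu.1]) (by linarith [hxu.2])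
  have l2 := low (y - u) (u - x') (by linarith [hxu'.2]) (by linarith [hxu'.1])
  rw [show y - x + (x - u) = y - u by ring] at l1
  rw [show y - u + (u - x') = y - x' by ring] at l2
  constructor <;> linarith [a.1, a.2, b.1, b.2]

lemma Ren.iint {lam : Measure ℝ} {h : ℝ → ℝ} {ρ C : ℝ}
    (H : Ren lam h ρ C) (a b : ℝ) : IntervalIntegrable h volume a b := by
  rw [intervalIntegrable_iff]
  refine Measure.integrableOn_of_bounded (M := C) (by simp) H.meas.aestronglyMeasurable ?_
  exact Eventually.of_forall fun x => by
        rw [Real.norm_of_nonneg (H.nonneg _)]; exact H.le _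

lemma Ren.identity {lam : Measure ℝ} [IsProbabilityMeasure lam] {h : ℝ → ℝ} {ρ C : ℝ}
    (H : Ren lam h ρ C) {L : ℝ} (hL : 0 ≤ L) :
    ∫ x, (∫ u in (0 : ℝ)..x, h (L - u)) ∂lam = (1 - Real.exp (-ρ * L)) / ρ := by
  have hm := H.meas
  have h1 : ∫ y in (0:ℝ)..L, h y = (∫ y in (0:ℝ)..L, Real.exp (-ρ * y)) +
      ∫ y in (0:ℝ)..L, ∫ x, h (y - x) ∂lam := by
    rw [← intervalIntegral.integral_add]
    · refine intervalIntegral.integral_congr fun y hy => ?_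
      rw [Set.uIcc_of_le hL] at hy
      have := H.eqn y
      rw [if_pos hy.1] at this
      exact this
    · exact (by fun_prop : Continuous fun y : ℝ => Real.exp (-ρ * y)).intervalIntegrable _ _
    · rw [intervalIntegrable_iff]
      refine Measure.integrableOn_of_bounded (M := C) (by simp) ?_ ?_
      · have : StronglyMeasurable (fun z : ℝ × ℝ => h (z.1 - z.2)) :=
          (hm.comp (by fun_prop)).stronglyMeasurable
        exact this.integral_prod_right.aestronglyMeasurable
      · refine Eventually.of_forall fun y => ?_
        refine (norm_integral_le_of_norm_le_const (C := C) (Eventually.of_forall fun x => ?_)).trans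
          (by simp)
        rw [Real.norm_of_nonneg (H.nonneg _)]; exact H.le _
  have h2 : ∫ y in (0:ℝ)..L, ∫ x, h (y - x) ∂lam = ∫ x, (∫ y in (0:ℝ)..L, h (y - x)) ∂lam := by
    simp only [intervalIntegral.integral_of_le hL]
    refine integral_integral_swap ?_
    refine Integrable.of_bound (C := C) ?_ ?_
    · exact (hm.comp (by fun_prop : Measurable fun z : ℝ × ℝ => z.1 - z.2)).aestronglyMeasurable
    · exact Eventually.of_forall fun x => by
        simp only [Function.uncurry]
        rw [Real.norm_of_nonneg (H.nonneg _)]; exact H.le _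
  have h3 : ∀ᵐ x ∂lam, ∫ u in (0 : ℝ)..x, h (L - u) =
      (∫ y in (0:ℝ)..L, h y) - ∫ y in (0:ℝ)..L, h (y - x) := by
    filter_upwards [H.pos] with x hx
    rw [intervalIntegral.integral_comp_sub_left (fun u => h u), intervalIntegral.integral_comp_sub_right (fun u => h u)]
    have hz : ∫ u in (0 - x)..0, h u = 0 := by
      refine (intervalIntegral.integral_congr_ae (g := fun _ => 0) ?_).trans (by simp)
      have : ∀ᵐ u : ℝ, u ≠ 0 := by simp [ae_iff]
      filter_upwards [this] with u hu0 hu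
      rw [Set.uIoc_of_le (by linarith)] at hu
      exact H.neg u (lt_of_le_of_ne hu.2 hu0)
    rw [← intervalIntegral.integral_add_adjacent_intervals (H.iint (0 - x) 0) (H.iint 0 (L - x)), hz,
      ← intervalIntegral.integral_add_adjacent_intervals (H.iint 0 (L - x)) (H.iint (L - x) L)]
    simp
  rw [integral_congr_ae h3, integral_sub (by simp), ← h2, h1]
  · rw [integral_add (by simp) (by simp)]
    simp
    rw [show (fun y => Real.exp (-(ρ * y))) = fun y => Real.exp ((-ρ) * y) by simp]
    rw [intervalIntegral.integral_comp_mul_left (fun u => Real.exp u) (by linarith [H.rho]), integral_exp]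
    simp
    field_simp
    ring
  · refine Integrable.of_bound (C := C * L) ?_ ?_
    · simp only [intervalIntegral.integral_of_le hL]
      have : StronglyMeasurable (fun z : ℝ × ℝ => h (z.2 - z.1)) :=
          (hm.comp (by fun_prop)).stronglyMeasurable
      exact this.integral_prod_right.aestronglyMeasurable
    · refine Eventually.of_forall fun y => ?_
      refine (intervalIntegral.norm_integral_le_of_norm_le_const (C := C) (fun x _ => ?_)).trans ?_
      · rw [Real.norm_of_nonneg (H.nonneg _)]; exact H.le _
      · rw [sub_zero, abs_of_nonneg hL]

end

section

open MeasureTheory Topology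

lemma Ren.limit {lam : Measure ℝ} [IsProbabilityMeasure lam] {h : ℝ → ℝ} {ρ C : ℝ}
    (H : Ren lam h ρ C) (l : Filter ℝ) [l.IsCountablyGenerated] (hl : l ≤ atTop)
    (w : ℝ → ℝ) (hwm : Measurable w) (w0 : ℝ) (hw0 : 0 < w0) (hw1 : ∀ u, w0 ≤ w u)
    (hw2 : ∀ u, w u ≤ 1)
    (hw : ∀ u, Tendsto (fun L => h (L - u) - w u * h L) l (𝓝 0)) :
    ∃ c, 0 < c ∧ Tendsto h l (𝓝 c) := by
  have hm := H.meas
  have hC0 : 0 ≤ C := (H.nonneg 0).trans (H.le 0)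
  have hwi : ∀ a b, IntervalIntegrable w volume a b := by
    intro a b
    rw [intervalIntegrable_iff]
    refine Measure.integrableOn_of_bounded (M := 1) (by simp) hwm.aestronglyMeasurable ?_
    exact Eventually.of_forall fun x => by
      rw [Real.norm_of_nonneg (hw0.le.trans (hw1 _))]; exact hw2 _
  have hhi : ∀ L a b, IntervalIntegrable (fun u => h (L - u)) volume a b := by
    intro L a b
    rw [intervalIntegrable_iff]
    refine Measure.integrableOn_of_bounded (M := C) (by simp)
      (hm.comp (by fun_prop)).aestronglyMeasurable ?_
    exact Eventually.of_forall fun x => by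
      rw [Real.norm_of_nonneg (H.nonneg _)]; exact H.le _
  have meas : ∀ f : ℝ → ℝ, Measurable f → AEStronglyMeasurable (fun x => ∫ u in (0:ℝ)..x, f u) lam := by
    intro f hf
    have h1 : StronglyMeasurable (fun x : ℝ => ∫ u, (Set.Ioc 0 x).indicator f u) := by
      have : StronglyMeasurable (fun z : ℝ × ℝ => (Set.Ioc 0 z.1).indicator f z.2) := by
        apply Measurable.stronglyMeasurable
        have : (fun z : ℝ × ℝ => (Set.Ioc 0 z.1).indicator f z.2) =
            {z : ℝ × ℝ | 0 < z.2 ∧ z.2 ≤ z.1}.indicator (fun z => f z.2) := by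
          ext z; simp [Set.indicator]
        rw [this]
        refine (hf.comp measurable_snd).indicator ?_
        exact (measurableSet_lt measurable_const measurable_snd).inter
          (measurableSet_le measurable_snd measurable_fst)
      exact this.integral_prod_right
    refine h1.aestronglyMeasurable.congr ?_
    filter_upwards [H.pos] with x hx
    rw [intervalIntegral.integral_of_le hx.le, integral_indicator measurableSet_Ioc]
  have hbound : ∀ (f : ℝ → ℝ) (M : ℝ), (∀ u, |f u| ≤ M) → ∀ x, ‖∫ u in (0:ℝ)..x, f u‖ ≤ M * |x| := by
    intro f M hf x
    simpa using intervalIntegral.norm_integral_le_of_norm_le_const (C := M) (a := 0) (b := x) (f := f)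
      (fun u _ => hf u)
  have hI1 : Integrable (fun x => ∫ u in (0:ℝ)..x, w u) lam := by
    refine Integrable.mono' (H.int.abs.const_mul 1) (meas w hwm) (Eventually.of_forall ?_)
    exact hbound w 1 fun u => by rw [abs_of_nonneg (hw0.le.trans (hw1 _))]; exact hw2 _
  have hI2 : ∀ L, Integrable (fun x => ∫ u in (0:ℝ)..x, h (L - u)) lam := by
    intro L
    refine Integrable.mono' (H.int.abs.const_mul C) (meas _ (by fun_prop)) (Eventually.of_forall ?_)
    exact hbound _ C fun u => by rw [abs_of_nonneg (H.nonneg _)]; exact H.le _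
  set I := ∫ x, (∫ u in (0:ℝ)..x, w u) ∂lam with hI
  have hIpos : 0 < I := by
    have h1 : 0 < ∫ x, x ∂lam := by
      rw [integral_pos_iff_support_of_nonneg_ae (H.pos.mono fun x hx => hx.le) H.int]
      have : (Function.support fun x : ℝ => x) ∈ ae lam := H.pos.mono fun x hx => by
        simpa using hx.ne'
      have h9 := (prob_compl_eq_zero_iff (μ := lam) (measurableSet_support measurable_id)).1 this
      exact h9.symm ▸ zero_lt_one
    have h2 : w0 * ∫ x, x ∂lam ≤ I := by
      rw [← integral_const_mul]
      refine integral_mono_ae (H.int.const_mul w0) hI1 ?_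
      filter_upwards [H.pos] with x hx
      have := intervalIntegral.integral_mono_on hx.le (by simp) (hwi 0 x) (fun u _ => hw1 u)
      simpa [mul_comm] using this
    exact (mul_pos hw0 h1).trans_le h2
  have hF : Tendsto (fun L => ∫ x, (∫ u in (0:ℝ)..x, (h (L - u) - w u * h L)) ∂lam) l (𝓝 0) := by
    have hb : ∀ L u, |h (L - u) - w u * h L| ≤ C := by
      intro L u
      have := mul_nonneg (hw0.le.trans (hw1 u)) (H.nonneg L)
      have := mul_le_mul (hw2 u) (H.le L) (H.nonneg _) zero_le_one
      rw [abs_le]; constructor <;> linarith [H.nonneg (L - u), H.le (L - u)]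
    have : (0:ℝ) = ∫ x : ℝ, (0:ℝ) ∂lam := by simp
    suffices hgoal : Tendsto (fun L => ∫ x, (∫ u in (0:ℝ)..x, (h (L - u) - w u * h L)) ∂lam) l
        (𝓝 (∫ x : ℝ, (0:ℝ) ∂lam)) by
      rwa [← this] at hgoal
    refine tendsto_integral_filter_of_dominated_convergence (fun x => C * |x|) ?_ ?_
      (H.int.abs.const_mul C) ?_
    · exact Eventually.of_forall fun L => meas _ (by fun_prop)
    · exact Eventually.of_forall fun L => Eventually.of_forall fun x => hbound _ C (hb L) x
    · refine Eventually.of_forall fun x => ?_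
      have h0 : (0:ℝ) = ∫ u in (0:ℝ)..x, (0:ℝ) := by simp
      suffices hgoal : Tendsto (fun L => ∫ u in (0:ℝ)..x, (h (L - u) - w u * h L)) l
        (𝓝 (∫ u in (0:ℝ)..x, (0:ℝ))) by
        rwa [← h0] at hgoal
      refine intervalIntegral.tendsto_integral_filter_of_dominated_convergence (fun _ => C) ?_ ?_
        (by simp) ?_
      · exact Eventually.of_forall fun L => (by fun_prop : Measurable fun u => h (L - u) - w u * h L).aestronglyMeasurable
      · exact Eventually.of_forall fun L => Eventually.of_forall fun u _ => hb L u
      · exact Eventually.of_forall fun u _ => hw u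
  have hF2 : ∀ᶠ L in l, ∫ x, (∫ u in (0:ℝ)..x, (h (L - u) - w u * h L)) ∂lam =
      (1 - Real.exp (-ρ * L)) / ρ - I * h L := by
    filter_upwards [hl (eventually_ge_atTop 0)] with L hL
    rw [← H.identity hL, hI, ← integral_mul_const, ← integral_sub (hI2 L) (hI1.mul_const _)]
    congr 1; ext x
    rw [intervalIntegral.integral_sub (hhi L 0 x) ((hwi 0 x).mul_const _),
      intervalIntegral.integral_mul_const]
  have hE : Tendsto (fun L => (1 - Real.exp (-ρ * L)) / ρ) l (𝓝 (1 / ρ)) := by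
    have : Tendsto (fun y : ℝ => Real.exp (-ρ * y)) atTop (𝓝 0) :=
      Real.tendsto_exp_atBot.comp (Tendsto.const_mul_atTop_of_neg (by linarith [H.rho]) tendsto_id)
    simpa using ((tendsto_const_nhds (x := (1:ℝ))).sub (this.mono_left hl)).div_const ρ
  have hfin := ((hE.sub hF).div_const I)
  refine ⟨(1 / ρ - 0) / I, by have := H.rho; simp only [sub_zero]; positivity, hfin.congr' ?_⟩
  filter_upwards [hF2] with L hL
  rw [hL]
  field_simp
  ring

theorem Ren.main {lam : Measure ℝ} [IsProbabilityMeasure lam] {h : ℝ → ℝ} {ρ C : ℝ}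
    (H : Ren lam h ρ C)
    (hstep : ∀ d > 0, (∀ x, 0 < lam.real {x} → ∃ k : ℤ, x = d * k) →
      ∀ (k : ℤ) (δ : ℝ), 0 ≤ δ → δ < d → h (d * k + δ) = Real.exp (-ρ * δ) * h (d * k))
    (hne : ∃ x ≠ 0, 0 < lam.real {x}) :
    ∃ (c : ℝ → ℝ) (c0 c1 : ℝ), 0 < c0 ∧ (∀ y, c0 ≤ c y) ∧ (∀ y, c y ≤ c1) ∧
      (∀ x ∈ AddSubgroup.closure {x | 0 < lam.real {x}}, ∀ y, c (y - x) = c y) ∧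
      Tendsto (fun y => h y - c y) atTop (𝓝 0) := by
  rcases AddSubgroup.dense_or_cyclic (AddSubgroup.closure {x | 0 < lam.real {x}}) with hd | ⟨a, ha⟩
  · obtain ⟨c, hc, hlim⟩ := H.limit atTop le_rfl (fun _ => 1) measurable_const 1 one_pos
      (fun _ => le_rfl) (fun _ => le_rfl) (by simpa using H.dense hd)
    refine ⟨fun _ => c, c, c, hc, fun _ => le_rfl, fun _ => le_rfl, fun _ _ _ => rfl, ?_⟩
    simpa using hlim.sub_const c
  · have hmem : ∀ x, 0 < lam.real {x} → ∃ k : ℤ, x = a * k := by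
      intro x hx
      have : x ∈ AddSubgroup.closure {x | 0 < lam.real {x}} := AddSubgroup.subset_closure hx
      rw [ha, AddSubgroup.mem_closure_singleton] at this
      obtain ⟨k, hk⟩ := this
      exact ⟨k, by rw [← hk]; simp [mul_comm]⟩
    have ha0 : a ≠ 0 := by
      rintro rfl
      obtain ⟨x, hx, hx'⟩ := hne
      obtain ⟨k, hk⟩ := hmem x hx'
      simp at hk; exact hx hk
    obtain ⟨d, hd0, hd⟩ : ∃ d > 0, ∀ x, x ∈ AddSubgroup.closure {x | 0 < lam.real {x}} ↔ ∃ k : ℤ, x = d * k := by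
      refine ⟨|a|, abs_pos.2 ha0, fun x => ?_⟩
      rw [ha, AddSubgroup.mem_closure_singleton]
      rcases abs_choice a with h | h
      · rw [h]
        exact ⟨fun ⟨k, hk⟩ => ⟨k, by rw [← hk]; simp [mul_comm]⟩,
          fun ⟨k, hk⟩ => ⟨k, by rw [hk]; simp [mul_comm]⟩⟩
      · rw [h]
        exact ⟨fun ⟨k, hk⟩ => ⟨-k, by rw [← hk]; simp [mul_comm]⟩,
          fun ⟨k, hk⟩ => ⟨-k, by rw [hk]; simp [mul_comm]⟩⟩
    have hst := hstep d hd0 (fun x hx => (hd x).1 (AddSubgroup.subset_closure hx))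
    have hρ := H.rho
    have hcz : Tendsto (fun k : ℤ => d * (k : ℝ)) atTop atTop :=
      Tendsto.const_mul_atTop hd0 tendsto_intCast_atTop_atTop
    obtain ⟨c, hc, hlim⟩ := H.limit (map (fun k : ℤ => d * (k : ℝ)) atTop) hcz
      (fun u => Real.exp (-ρ * (d * ⌈u / d⌉ - u))) (by fun_prop) (Real.exp (-ρ * d)) (Real.exp_pos _)
      (by
        intro u
        apply Real.exp_le_exp.2
        have := Int.ceil_lt_add_one (u / d)
        have : (⌈u / d⌉ : ℝ) * d < u + d := by
          have := mul_lt_mul_of_pos_right this hd0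
          rwa [add_mul, div_mul_cancel₀ _ hd0.ne', one_mul] at this
        nlinarith)
      (by
        intro u
        apply Real.exp_le_one_iff.2
        have := Int.le_ceil (u / d)
        rw [div_le_iff₀ hd0] at this
        nlinarith)
      (by
        intro u
        rw [tendsto_map'_iff]
        have hx : d * (⌈u / d⌉ : ℝ) ∈ AddSubgroup.closure {x | 0 < lam.real {x}} := (hd _).2 ⟨_, rfl⟩
        have := ((H.group hx).comp hcz).const_mul (Real.exp (-ρ * (d * ⌈u / d⌉ - u)))
        rw [mul_zero] at this
        refine this.congr fun k => ?_
        simp only [Function.comp]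
        have h1 := Int.le_ceil (u / d)
        rw [div_le_iff₀ hd0] at h1
        have h2 : (⌈u / d⌉ : ℝ) * d < u + d := by
          have := mul_lt_mul_of_pos_right (Int.ceil_lt_add_one (u / d)) hd0
          rwa [add_mul, div_mul_cancel₀ _ hd0.ne', one_mul] at this
        have := hst (k - ⌈u / d⌉) (d * ⌈u / d⌉ - u) (by linarith) (by linarith)
        push_cast at this
        rw [show d * ((k:ℝ) - ⌈u / d⌉) + (d * ⌈u / d⌉ - u) = d * k - u by ring,
          show d * ((k:ℝ) - ⌈u / d⌉) = d * k - d * ⌈u / d⌉ by ring] at this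
        rw [this]; ring)
    rw [tendsto_map'_iff] at hlim
    have hfl : ∀ y : ℝ, 0 ≤ y - d * ⌊y / d⌋ ∧ y - d * ⌊y / d⌋ < d := by
      intro y
      have h1 := Int.floor_le (y / d)
      have h2 := Int.lt_floor_add_one (y / d)
      rw [le_div_iff₀ hd0] at h1
      rw [div_lt_iff₀ hd0] at h2
      constructor <;> nlinarith
    refine ⟨fun y => Real.exp (-ρ * (y - d * ⌊y / d⌋)) * c, Real.exp (-ρ * d) * c, c, by positivity,
      ?_, ?_, ?_, ?_⟩
    · intro y
      have := hfl y
      refine mul_le_mul_of_nonneg_right ?_ hc.le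
      apply Real.exp_le_exp.2; nlinarith
    · intro y
      have := hfl y
      have : Real.exp (-ρ * (y - d * ⌊y / d⌋)) ≤ 1 := Real.exp_le_one_iff.2 (by nlinarith)
      nlinarith
    · intro x hx y
      obtain ⟨k, rfl⟩ := (hd x).1 hx
      have : (y - d * k) / d = y / d - k := by field_simp
      simp only [this, Int.floor_sub_intCast]
      push_cast
      congr 3; ring
    · have hfloor : Tendsto (fun y : ℝ => ⌊y / d⌋) atTop atTop :=
        tendsto_floor_atTop.comp (tendsto_id.atTop_div_const hd0)
      have h1 := (hlim.comp hfloor).sub_const c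
      rw [sub_self] at h1
      refine squeeze_zero_norm (fun y => ?_) (by simpa using h1.norm)
      have := hst ⌊y / d⌋ _ (hfl y).1 (hfl y).2
      rw [show d * (⌊y / d⌋ : ℝ) + (y - d * ⌊y / d⌋) = y by ring] at this
      rw [this, ← mul_sub, norm_mul]
      have h3 : ‖Real.exp (-ρ * (y - d * ⌊y / d⌋))‖ ≤ 1 := by
        rw [Real.norm_of_nonneg (Real.exp_pos _).le]
        exact Real.exp_le_one_iff.2 (by nlinarith [hfl y])
      simpa using mul_le_mul_of_nonneg_right h3 (norm_nonneg (h (d * ⌊y / d⌋) - c))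

end

section

open MeasureTheory Topology

/-- the i.i.d. measure -/
def QQ (lam : Measure ℝ) [IsProbabilityMeasure lam] : Measure (ℕ → ℝ) :=
  Measure.infinitePi (fun _ : ℕ => lam)

instance (lam : Measure ℝ) [IsProbabilityMeasure lam] : IsProbabilityMeasure (QQ lam) := by
  unfold QQ; infer_instance

/-- partial sums -/
def SS (k : ℕ) (ω : ℕ → ℝ) : ℝ := ∑ i ∈ Finset.range k, ω i

lemma measurable_SS (k : ℕ) : Measurable (SS k) := by
  unfold SS; fun_prop

lemma QQ_map (lam : Measure ℝ) [IsProbabilityMeasure lam] (i : ℕ) :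
    (QQ lam).map (fun ω => ω i) = lam := by
  unfold QQ; exact Measure.infinitePi_map_eval _ i

lemma QQ_indep (lam : Measure ℝ) [IsProbabilityMeasure lam] :
    ProbabilityTheory.iIndepFun (fun (i : ℕ) (ω : ℕ → ℝ) => ω i) (QQ lam) :=
  ProbabilityTheory.iIndepFun_infinitePi (X := fun _ x => x) (fun _ => measurable_id)

lemma QQ_succ (lam : Measure ℝ) [IsProbabilityMeasure lam] (f : ℝ → ℝ) (hf : Measurable f) (C : ℝ)
    (hC : ∀ y, |f y| ≤ C) (k : ℕ) (y : ℝ) :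
    ∫ ω, f (y - SS (k + 1) ω) ∂(QQ lam) = ∫ x, (∫ ω, f (y - x - SS k ω) ∂(QQ lam)) ∂lam := by
  have hind : ProbabilityTheory.IndepFun (SS k) (fun ω => ω k) (QQ lam) := by
    have := (QQ_indep lam).indepFun_sum_range_succ (fun i => measurable_pi_apply i) k
    convert this using 1
    ext ω; simp [SS]
  have hmk := measurable_SS k
  have hpi : Measurable (fun ω : ℕ → ℝ => ω k) := measurable_pi_apply k
  rw [ProbabilityTheory.indepFun_iff_map_prod_eq_prod_map_map hmk.aemeasurable hpi.aemeasurable,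
    QQ_map] at hind
  have hmf : Measurable (fun z : ℝ × ℝ => f (y - z.2 - z.1)) := by fun_prop
  have h1 : ∫ ω, f (y - SS (k + 1) ω) ∂(QQ lam) =
      ∫ z, f (y - z.2 - z.1) ∂((QQ lam).map (fun ω => (SS k ω, ω k))) := by
    rw [integral_map (by fun_prop) hmf.aestronglyMeasurable]
    congr 1; ext ω
    simp only [SS, Finset.sum_range_succ]
    congr 1; ring
  have hp : IsProbabilityMeasure ((QQ lam).map (SS k)) := Measure.isProbabilityMeasure_map hmk.aemeasurable
  rw [h1, hind, integral_prod_symm]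
  · congr 1; ext x
    rw [integral_map hmk.aemeasurable (Measurable.aestronglyMeasurable (by fun_prop))]
  · exact Integrable.of_bound hmf.aestronglyMeasurable C (Eventually.of_forall fun z => hC _)

lemma clt_real (lam : Measure ℝ) [IsProbabilityMeasure lam] (h2 : MemLp (fun x : ℝ => x) 2 lam)
    (v : NNReal) (hv : (v : ℝ) = ProbabilityTheory.variance (fun x : ℝ => x) lam) (hv0 : v ≠ 0)
    (k : ℕ → ℕ) (hk : Tendsto k atTop atTop) (τ : ℕ → ℝ) (τ0 : ℝ) (hτ : Tendsto τ atTop (𝓝 τ0)) :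
    Tendsto (fun N => (QQ lam).real
      {ω | (Real.sqrt (k N))⁻¹ * (SS (k N) ω - k N * ∫ x, x ∂lam) ≤ τ N}) atTop
      (𝓝 ((ProbabilityTheory.gaussianReal 0 v).real (Set.Iic τ0))) := by
  have hid : ∀ i, ProbabilityTheory.IdentDistrib (fun ω : ℕ → ℝ => ω i) (fun x : ℝ => x) (QQ lam) lam := by
    intro i
    refine ⟨(measurable_pi_apply i).aemeasurable, by fun_prop, ?_⟩
    rw [QQ_map]; simp
  have hv' : v = (ProbabilityTheory.variance (fun ω : ℕ → ℝ => ω 0) (QQ lam)).toNNReal := by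
    rw [(hid 0).variance_eq, ← hv]; simp
  have hmean : ∫ ω : ℕ → ℝ, ω 0 ∂(QQ lam) = ∫ x, x ∂lam := (hid 0).integral_eq
  have := ProbabilityTheory.tendstoInDistribution_inv_sqrt_mul_sum_sub (X := fun (i : ℕ) (ω : ℕ → ℝ) => ω i)
    (P := QQ lam) (Y := fun x : ℝ => x) (P' := ProbabilityTheory.gaussianReal 0 v)
    ⟨by fun_prop, by rw [hv']; simp⟩ ((hid 0).memLp_iff.2 h2) (QQ_indep lam)
    (fun i => (hid i).trans (hid 0).symm)
  have hclt2 : TendstoInDistribution (fun (N : ℕ) ω => (Real.sqrt (k N))⁻¹ * (SS (k N) ω - k N * ∫ x, x ∂lam))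
      atTop (fun x : ℝ => x) (fun _ => QQ lam) (ProbabilityTheory.gaussianReal 0 v) := by
    refine ⟨fun N => ?_, by fun_prop, ?_⟩
    · have := measurable_SS (k N)
      fun_prop
    · have h3 := this.tendsto.comp hk
      simp only [hmean] at h3
      exact h3
  have hclt3 := hclt2.add_of_tendstoInMeasure_const (Y := fun N _ => - τ N) (c := -τ0)
    (tendstoInMeasure_of_tendsto_ae (fun N => by fun_prop) (Eventually.of_forall fun ω => hτ.neg))
    (fun N => by fun_prop)
  have := ProbabilityTheory.nullSingletonClass_gaussianReal (μ := 0) hv0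
  have hfr : ((ProbabilityTheory.gaussianReal 0 v).map (fun x : ℝ => x + -τ0)) (frontier (Set.Iic 0)) = 0 := by
    rw [Measure.map_apply (by fun_prop) (by simp), frontier_Iic]
    have : (fun x : ℝ => x + -τ0) ⁻¹' {0} = {τ0} := by
      ext x; simp
    rw [this]; simp
  have hfin := ProbabilityMeasure.tendsto_measure_of_null_frontier_of_tendsto' hclt3.tendsto (E := Set.Iic 0) hfr
  have hfin2 := (ENNReal.tendsto_toReal (by simp)).comp hfin
  have e0 : ((ProbabilityTheory.gaussianReal 0 v).map (fun x : ℝ => x + -τ0)) (Set.Iic 0) =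
      ProbabilityTheory.gaussianReal 0 v (Set.Iic τ0) := by
    rw [Measure.map_apply (by fun_prop) (by simp)]
    congr 1; ext x; simp
  simp only [ProbabilityMeasure.coe_mk] at hfin2
  rw [e0] at hfin2
  refine hfin2.congr fun N => ?_
  simp only [Function.comp, measureReal_def]
  congr 1
  rw [Measure.map_apply (by have := measurable_SS (k N); fun_prop) (by simp)]
  congr 1; ext ω; simp

lemma tail_limit {lam : Measure ℝ} [IsProbabilityMeasure lam] {h : ℝ → ℝ} {ρ C : ℝ}
    (H : Ren lam h ρ C) (h2 : MemLp (fun x : ℝ => x) 2 lam)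
    (v : NNReal) (hv : (v : ℝ) = ProbabilityTheory.variance (fun x : ℝ => x) lam) (hv0 : v ≠ 0)
    (c : ℝ → ℝ) (c0 c1 : ℝ) (hc0 : 0 < c0) (hcl : ∀ y, c0 ≤ c y) (hcu : ∀ y, c y ≤ c1)
    (hcG : ∀ x ∈ AddSubgroup.closure {x | 0 < lam.real {x}}, ∀ y, c (y - x) = c y)
    (hc : Tendsto (fun y => h y - c y) atTop (𝓝 0))
    (hat : ∀ᵐ x ∂lam, 0 < lam.real {x})
    (k : ℕ → ℕ) (hk : Tendsto k atTop atTop) (L : ℕ → ℝ) (hL : Tendsto L atTop atTop) (τ0 : ℝ)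
    (hτ : Tendsto (fun N => (Real.sqrt (k N))⁻¹ * (L N - k N * ∫ x, x ∂lam)) atTop (𝓝 τ0)) :
    Tendsto (fun N => (∫ ω, h (L N - SS (k N) ω) ∂(QQ lam)) / h (L N)) atTop
      (𝓝 ((ProbabilityTheory.gaussianReal 0 v).real (Set.Iic τ0))) := by
  have hm := H.meas
  have hC0 : 0 ≤ C := (H.nonneg 0).trans (H.le 0)
  have hc10 : 0 ≤ c1 := hc0.le.trans ((hcl 0).trans (hcu 0))
  set G := (ProbabilityTheory.gaussianReal 0 v).real (Set.Iic τ0) with hG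
  have hsq : Tendsto (fun N => (Real.sqrt (k N))⁻¹) atTop (𝓝 0) :=
    tendsto_inv_atTop_zero.comp (Real.tendsto_sqrt_atTop.comp (tendsto_natCast_atTop_atTop.comp hk))
  have hp : ∀ Y : ℝ, Tendsto (fun N => (QQ lam).real {ω | SS (k N) ω ≤ L N - Y}) atTop (𝓝 G) := by
    intro Y
    have hτ' : Tendsto (fun N => (Real.sqrt (k N))⁻¹ * (L N - Y - k N * ∫ x, x ∂lam)) atTop (𝓝 τ0) := by
      have := hτ.sub (hsq.mul_const Y)
      simp only [zero_mul, sub_zero] at this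
      refine this.congr fun N => by ring
    refine (clt_real lam h2 v hv hv0 k hk _ τ0 hτ').congr' ?_
    filter_upwards [hk.eventually_gt_atTop 0] with N hN
    congr 1; ext ω
    have : 0 < (Real.sqrt (k N))⁻¹ := by
      have : (0:ℝ) < k N := by exact_mod_cast hN
      positivity
    simp only [Set.mem_ofPred_eq]
    rw [mul_le_mul_iff_right₀ this]
    constructor <;> intro h <;> linarith
  have hmS : ∀ N Y, MeasurableSet {ω | SS (k N) ω ≤ L N - Y} := fun N Y =>
    measurableSet_le (measurable_SS _) measurable_const
  have hSG : ∀ᵐ ω ∂(QQ lam), ∀ n, SS n ω ∈ AddSubgroup.closure {x | 0 < lam.real {x}} := by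
    have h1 : ∀ᵐ ω ∂(QQ lam), ∀ i : ℕ, 0 < lam.real {ω i} := by
      rw [ae_all_iff]
      intro i
      have := hat
      rw [← QQ_map lam i] at this
      have h3 := ae_of_ae_map (measurable_pi_apply i).aemeasurable this
      rw [QQ_map lam i] at h3
      exact h3
    filter_upwards [h1] with ω hω n
    exact AddSubgroup.sum_mem _ fun i _ => AddSubgroup.subset_closure (hω i)
  have hdiff : Tendsto (fun N => (∫ ω, h (L N - SS (k N) ω) ∂(QQ lam)) -
      c (L N) * (QQ lam).real {ω | SS (k N) ω ≤ L N - 0}) atTop (𝓝 0) := by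
    rw [Metric.tendsto_nhds]
    intro ε hε
    have hcε := (Metric.tendsto_nhds.1 hc) (ε / 2) (half_pos hε)
    obtain ⟨Y', hY'⟩ := eventually_atTop.1 hcε
    set Y := max Y' 0 with hYdef
    have hY : ∀ y, Y ≤ y → |h y - c y| < ε / 2 := by
      intro y hy
      simpa [Real.dist_eq] using hY' y ((le_max_left _ _).trans hy)
    have hY0 : 0 ≤ Y := le_max_right _ _
    have hlim := ((hp 0).sub (hp Y)).const_mul (C + c1)
    rw [sub_self, mul_zero] at hlim
    filter_upwards [hlim.eventually_lt_const (half_pos hε)] with N hN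
    rw [Real.dist_eq, sub_zero]
    have i1 : Integrable (fun ω => h (L N - SS (k N) ω)) (QQ lam) :=
      Integrable.of_bound (hm.comp (measurable_const.sub (measurable_SS _))).aestronglyMeasurable C
        (Eventually.of_forall fun x => by
        rw [Real.norm_of_nonneg (H.nonneg _)]; exact H.le _)
    have i2 : ∀ Y, Integrable ({ω | SS (k N) ω ≤ L N - Y}.indicator (fun _ => (1:ℝ))) (QQ lam) :=
      fun Y => (integrable_const 1).indicator (hmS N Y)
    have e2 : ∀ Y, ∫ ω, ({ω | SS (k N) ω ≤ L N - Y}.indicator (fun _ => (1:ℝ))) ω ∂(QQ lam) =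
        (QQ lam).real {ω | SS (k N) ω ≤ L N - Y} := by
      intro Y
      rw [integral_indicator (hmS N Y)]; simp
    rw [← e2 0, ← integral_const_mul, ← integral_sub i1 ((i2 0).const_mul _)]
    rw [← Real.norm_eq_abs]
    refine lt_of_le_of_lt (norm_integral_le_of_norm_le (g := fun ω => ε / 2 + (C + c1) *
      (({ω | SS (k N) ω ≤ L N - 0}.indicator (fun _ => (1:ℝ))) ω -
       ({ω | SS (k N) ω ≤ L N - Y}.indicator (fun _ => (1:ℝ))) ω)) ?_ ?_) ?_
    · exact (integrable_const _).add (((i2 0).sub (i2 Y)).const_mul _)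
    · filter_upwards [hSG] with ω hω
      have hce := hcG _ (hω (k N)) (L N)
      rw [Real.norm_eq_abs]
      by_cases hA : SS (k N) ω ≤ L N - Y
      · have hB : SS (k N) ω ≤ L N - 0 := by linarith
        simp only [Set.indicator, Set.mem_ofPred_eq, if_pos hA, if_pos hB]
        rw [← hce, mul_one]
        have := hY (L N - SS (k N) ω) (by linarith)
        linarith
      · by_cases hB : SS (k N) ω ≤ L N - 0
        · simp only [Set.indicator, Set.mem_ofPred_eq, if_neg hA, if_pos hB]
          rw [abs_le]
          constructor <;> linarith [H.nonneg (L N - SS (k N) ω), H.le (L N - SS (k N) ω), hcl (L N), hcu (L N)]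
        · simp only [Set.indicator, Set.mem_ofPred_eq, if_neg hA, if_neg hB]
          rw [H.neg _ (by linarith [not_le.1 hB])]
          simp; linarith
    · rw [integral_add (integrable_const _) (by exact ((i2 0).sub (i2 Y)).const_mul _), integral_const_mul,
        integral_sub (i2 0) (i2 Y), e2, e2]
      simp only [integral_const, probReal_univ, one_smul]
      linarith
  have hcL := hc.comp hL
  have hpos : ∀ᶠ N in atTop, c0 / 2 < h (L N) := by
    filter_upwards [hcL.eventually_const_lt (show -(c0/2) < 0 by linarith)] with N hN
    simp only [Function.comp] at hN
    linarith [hcl (L N)]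
  have hinv : ∀ᶠ N in atTop, |(h (L N))⁻¹| ≤ 2 / c0 := by
    filter_upwards [hpos] with N hN
    rw [abs_of_nonneg (inv_nonneg.2 (H.nonneg _))]
    rw [show 2 / c0 = (c0 / 2)⁻¹ by simp]
    exact inv_anti₀ (by linarith) hN.le
  have bd : ∀ f : ℕ → ℝ, Tendsto f atTop (𝓝 0) → Tendsto (fun N => f N * (h (L N))⁻¹) atTop (𝓝 0) := by
    intro f hf
    exact hf.zero_mul_isBoundedUnder_le ⟨2 / c0, by simpa [eventually_map] using hinv⟩
  have hb1 := bd _ hdiff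
  have hb2 := bd _ hcL
  have := hb1.add ((tendsto_const_nhds (x := (1:ℝ)).sub hb2).mul (hp 0))
  simp only [sub_zero, one_mul, zero_add] at this
  refine this.congr' ?_
  filter_upwards [hpos] with N hN
  have : h (L N) ≠ 0 := by linarith
  simp only [Function.comp]
  field_simp
  ring

end

section

/-- cumulative counts -/
def cnt (P : Set ℕ) (m M : ℕ) : ℕ := ∑ n ∈ Finset.Icc 1 M, af P m n

lemma af_finite (P : Set ℕ) (m n : ℕ) (hn : 1 ≤ n) :
    Finite {t : Fin m → ℕ // (∀ i, t i ∈ P) ∧ ∏ i, t i = n} := by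
  have : {t : Fin m → ℕ | (∀ i, t i ∈ P) ∧ ∏ i, t i = n} ⊆ Set.Iic (fun _ => n) := by
    rintro t ⟨-, ht⟩ i
    apply Nat.le_of_dvd hn
    rw [← ht]
    exact Finset.dvd_prod_of_mem t (Finset.mem_univ i)
  exact ((Set.finite_Iic _).subset this).to_subtype

lemma af_zero (P : Set ℕ) (n : ℕ) : af P 0 n = if n = 1 then 1 else 0 := by
  unfold af
  split_ifs with h
  · subst h
    rw [Nat.card_eq_one_iff_unique]
    exact ⟨⟨fun a b => Subtype.ext (Subsingleton.elim _ _)⟩, ⟨⟨fun i => 0, by simp⟩⟩⟩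
  · have : IsEmpty {t : Fin 0 → ℕ // (∀ i, t i ∈ P) ∧ ∏ i, t i = n} :=
      ⟨fun t => h (by have := t.2.2; simpa using this.symm)⟩
    exact Nat.card_of_isEmpty

open Classical in
lemma af_succ (P : Set ℕ) (m n : ℕ) (hn : 1 ≤ n) :
    af P (m + 1) n = ∑ p ∈ n.divisors with p ∈ P, af P m (n / p) := by
  have hfin : ∀ p : {p // p ∈ n.divisors.filter (· ∈ P)},
      Finite {t : Fin m → ℕ // (∀ i, t i ∈ P) ∧ ∏ i, t i = n / p} := by
    intro p
    apply af_finite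
    have := (Finset.mem_filter.1 p.2).1
    exact Nat.div_pos (Nat.divisor_le this) (Nat.pos_of_mem_divisors this)
  have e : {t : Fin (m + 1) → ℕ // (∀ i, t i ∈ P) ∧ ∏ i, t i = n} ≃
      (Σ p : {p // p ∈ n.divisors.filter (· ∈ P)},
        {t : Fin m → ℕ // (∀ i, t i ∈ P) ∧ ∏ i, t i = n / p}) :=
    { toFun := fun t => ⟨⟨t.1 0, by
          have h2 := t.2.2
          rw [Fin.prod_univ_succ] at h2
          simp only [Finset.mem_filter, Nat.mem_divisors]
          exact ⟨⟨⟨_, h2.symm⟩, by omega⟩, t.2.1 0⟩⟩,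
        ⟨fun i => t.1 i.succ, fun i => t.2.1 _, by
          have h2 := t.2.2
          rw [Fin.prod_univ_succ] at h2
          have : 0 < t.1 0 := Nat.pos_of_ne_zero (by intro h; rw [h] at h2; omega)
          exact (Nat.div_eq_of_eq_mul_right this h2.symm).symm⟩⟩
      invFun := fun s => ⟨Fin.cons s.1.1 s.2.1, by
          have h1 := Finset.mem_filter.1 s.1.2
          constructor
          · intro i
            refine Fin.cases ?_ (fun j => ?_) i
            · exact h1.2
            · simpa using s.2.2.1 j
          · rw [Fin.prod_univ_succ]
            simp only [Fin.cons_zero, Fin.cons_succ]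
            rw [s.2.2.2]
            exact Nat.mul_div_cancel' (Nat.dvd_of_mem_divisors h1.1)⟩
      left_inv := fun t => by
        apply Subtype.ext
        exact Fin.cons_self_tail t.1
      right_inv := fun s => by
        rcases s with ⟨⟨p, hp⟩, ⟨t, ht⟩⟩
        rfl }
  unfold af
  rw [Nat.card_congr e, Nat.card_sigma]
  exact Finset.sum_coe_sort (n.divisors.filter (· ∈ P))
    (fun p => Nat.card {t : Fin m → ℕ // (∀ i, t i ∈ P) ∧ ∏ i, t i = n / p})

lemma cnt_zero_right (P : Set ℕ) (m : ℕ) : cnt P m 0 = 0 := by simp [cnt]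

lemma cnt_zero_left (P : Set ℕ) (M : ℕ) : cnt P 0 M = if 1 ≤ M then 1 else 0 := by
  simp [cnt, af_zero]

lemma cnt_mono (P : Set ℕ) (m : ℕ) : Monotone (cnt P m) := by
  intro a b hab
  exact Finset.sum_le_sum_of_subset (Finset.Icc_subset_Icc_right hab)

open Classical in
lemma cnt_succ (P : Set ℕ) (hP : ∀ n ∈ P, 2 ≤ n) (m M K : ℕ) (hK : M < K) :
    cnt P (m + 1) M = ∑ p ∈ (Finset.range K).filter (· ∈ P), cnt P m (M / p) := by
  have h1 : cnt P (m + 1) M = ∑ n ∈ Finset.Icc 1 M, ∑ p ∈ (Finset.range K).filter (· ∈ P),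
      if p ∣ n then af P m (n / p) else 0 := by
    refine Finset.sum_congr rfl fun n hn => ?_
    rw [Finset.mem_Icc] at hn
    rw [af_succ P m n hn.1, ← Finset.sum_filter]
    refine Finset.sum_congr ?_ fun _ _ => rfl
    ext p
    simp only [Finset.mem_filter, Nat.mem_divisors, Finset.mem_range]
    constructor
    · rintro ⟨⟨a, b⟩, c⟩
      exact ⟨⟨by have := Nat.le_of_dvd hn.1 a; omega, c⟩, a⟩
    · rintro ⟨⟨a, b⟩, c⟩
      exact ⟨⟨c, by omega⟩, b⟩
  rw [h1, Finset.sum_comm]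
  refine Finset.sum_congr rfl fun p hp => ?_
  have hp2 := hP p (Finset.mem_filter.1 hp).2
  have hp0 : 0 < p := by omega
  rw [← Finset.sum_filter]
  unfold cnt
  refine Finset.sum_bij' (fun n _ => n / p) (fun q _ => p * q) ?_ ?_ ?_ ?_ ?_
  · intro n hn
    simp only [Finset.mem_filter, Finset.mem_Icc] at hn ⊢
    exact ⟨Nat.div_pos (Nat.le_of_dvd hn.1.1 hn.2) hp0, Nat.div_le_div_right hn.1.2⟩
  · intro q hq
    simp only [Finset.mem_filter, Finset.mem_Icc] at hq ⊢
    refine ⟨⟨Nat.mul_pos hp0 hq.1, ?_⟩, Dvd.intro _ rfl⟩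
    exact (Nat.mul_le_mul_left p hq.2).trans (Nat.mul_div_le M p)
  · intro n hn
    exact Nat.mul_div_cancel' (Finset.mem_filter.1 hn).2
  · intro q hq
    exact Nat.mul_div_cancel_left q hp0
  · intro n hn; rfl

lemma cnt_eq_zero (P : Set ℕ) (hP : ∀ n ∈ P, 2 ≤ n) (m M : ℕ) (h : M < 2 ^ m) : cnt P m M = 0 := by
  classical
  induction m generalizing M with
  | zero => simp at h; simp [h, cnt]
  | succ m ih =>
    rw [cnt_succ P hP m M (M + 1) (by omega)]
    refine Finset.sum_eq_zero fun p hp => ih _ ?_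
    have hp2 := hP p (Finset.mem_filter.1 hp).2
    rw [Nat.div_lt_iff_lt_mul (by omega)]
    calc M < 2 ^ (m + 1) := h
      _ = 2 ^ m * 2 := by ring
      _ ≤ 2 ^ m * p := Nat.mul_le_mul_left _ hp2

/-- tail counts -/
def Tl (P : Set ℕ) (k M : ℕ) : ℝ := ∑' m : ℕ, (cnt P (m + k) M : ℝ)

lemma cnt_eq_zero' (P : Set ℕ) (hP : ∀ n ∈ P, 2 ≤ n) (m M : ℕ) (h : M ≤ m) : cnt P m M = 0 :=
  cnt_eq_zero P hP m M (h.trans_lt Nat.lt_two_pow_self)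

lemma Tl_summable (P : Set ℕ) (hP : ∀ n ∈ P, 2 ≤ n) (k M : ℕ) :
    Summable (fun m : ℕ => (cnt P (m + k) M : ℝ)) := by
  refine summable_of_ne_finset_zero (s := Finset.range M) fun m hm => ?_
  rw [cnt_eq_zero' P hP _ _ (by simp at hm; omega)]; simp

lemma Tl_nonneg (P : Set ℕ) (k M : ℕ) : 0 ≤ Tl P k M := tsum_nonneg fun _ => Nat.cast_nonneg _

lemma Tl_zero_right (P : Set ℕ) (k : ℕ) : Tl P k 0 = 0 := by simp [Tl, cnt_zero_right]

lemma Tl_mono (P : Set ℕ) (hP : ∀ n ∈ P, 2 ≤ n) (k : ℕ) : Monotone (Tl P k) := by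
  intro a b hab
  exact (Tl_summable P hP k a).tsum_le_tsum (fun m => by exact_mod_cast cnt_mono P _ hab)
    (Tl_summable P hP k b)

lemma Tl_split (P : Set ℕ) (hP : ∀ n ∈ P, 2 ≤ n) (k M : ℕ) :
    Tl P 0 M = ∑ m ∈ Finset.range k, (cnt P m M : ℝ) + Tl P k M := by
  have := (Tl_summable P hP 0 M).sum_add_tsum_nat_add k
  simp only [add_zero] at this
  simp only [Tl, add_zero]
  exact this.symm

open Classical in
lemma Tl_succ (P : Set ℕ) (hP : ∀ n ∈ P, 2 ≤ n) (k M K : ℕ) (hK : M < K) :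
    Tl P (k + 1) M = ∑ p ∈ (Finset.range K).filter (· ∈ P), Tl P k (M / p) := by
  unfold Tl
  rw [← Summable.tsum_finsetSum (fun p _ => Tl_summable P hP k (M / p))]
  congr 1; ext m
  rw [← add_assoc, cnt_succ P hP _ M K hK]
  push_cast; rfl

lemma Tl_le (P : Set ℕ) (hP : ∀ n ∈ P, 2 ≤ n) (k M : ℕ) : Tl P k M ≤ Tl P 0 M := by
  rw [Tl_split P hP k M]
  have : 0 ≤ ∑ m ∈ Finset.range k, (cnt P m M : ℝ) := Finset.sum_nonneg fun _ _ => Nat.cast_nonneg _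
  linarith

open Classical in
lemma Tl_bound (P : Set ℕ) (hP : ∀ n ∈ P, 2 ≤ n) (hP2 : P.Nontrivial) (ρ : ℝ) (hρ : 0 < ρ)
    (hs : Summable (fun n : P => ((n : ℕ) : ℝ) ^ (-ρ)))
    (h1 : ∑' n : P, ((n : ℕ) : ℝ) ^ (-ρ) = 1) :
    ∃ C : ℝ, ∀ M : ℕ, 1 ≤ M → Tl P 0 M ≤ C * (M : ℝ) ^ ρ - 1 := by
  obtain ⟨a, ha, b, hb, hab⟩ := hP2
  set q := max a b with hq
  set C := 1 + Tl P 0 q with hC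
  have hC0 : 0 ≤ C := by linarith [Tl_nonneg P 0 q]
  refine ⟨C, fun M => ?_⟩
  induction M using Nat.strong_induction_on with
  | _ M ih =>
    intro hM
    have hM1 : (1:ℝ) ≤ (M:ℝ) ^ ρ := Real.one_le_rpow (by exact_mod_cast hM) hρ.le
    by_cases hMq : M ≤ q
    · have := Tl_mono P hP 0 hMq
      nlinarith
    · push Not at hMq
      rw [Tl_split P hP 1 M, Tl_succ P hP 0 M (M + 1) (by omega)]
      simp only [Finset.range_one, Finset.sum_singleton, cnt_zero_left, if_pos hM, Nat.cast_one]
      set F := (Finset.range (M + 1)).filter (· ∈ P) with hF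
      have hsum : ∑ p ∈ F, Tl P 0 (M / p) ≤ ∑ p ∈ F, (C * (M:ℝ) ^ ρ * (p:ℝ) ^ (-ρ) - 1) := by
        refine Finset.sum_le_sum fun p hp => ?_
        rw [hF, Finset.mem_filter, Finset.mem_range] at hp
        have hp2 := hP p hp.2
        have := ih (M / p) (Nat.div_lt_self hM (by omega)) (Nat.div_pos (by omega) (by omega))
        refine this.trans ?_
        have h3 : ((M / p : ℕ) : ℝ) ^ ρ ≤ (M:ℝ) ^ ρ * (p:ℝ) ^ (-ρ) := by
          rw [Real.rpow_neg (by positivity), ← div_eq_mul_inv, ← Real.div_rpow (by positivity) (by positivity)]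
          exact Real.rpow_le_rpow (by positivity) Nat.cast_div_le hρ.le
        have := mul_le_mul_of_nonneg_left h3 hC0
        linarith
      have hcard : 2 ≤ F.card := by
        have : ({a, b} : Finset ℕ) ⊆ F := by
          intro x hx
          simp only [Finset.mem_insert, Finset.mem_singleton] at hx
          rw [hF, Finset.mem_filter, Finset.mem_range]
          rcases hx with rfl | rfl
          · exact ⟨by omega, ha⟩
          · exact ⟨by omega, hb⟩
        have := Finset.card_le_card this
        rwa [Finset.card_pair hab] at this
      have hle1 : ∑ p ∈ F, (p:ℝ) ^ (-ρ) ≤ 1 := by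
        rw [← h1]
        have e1 : ∑ p ∈ F, (p:ℝ) ^ (-ρ) = ∑ p ∈ F.subtype (· ∈ P), ((p : ℕ):ℝ) ^ (-ρ) := by
          rw [Finset.sum_subtype_eq_sum_filter (f := fun p : ℕ => (p:ℝ) ^ (-ρ))]
          refine Finset.sum_congr ?_ fun _ _ => rfl
          rw [hF, Finset.filter_filter]; simp
        rw [e1]
        exact hs.sum_le_tsum _ (fun p _ => by positivity)
      rw [Finset.sum_sub_distrib, ← Finset.mul_sum] at hsum
      simp only [Finset.sum_const, nsmul_eq_mul, mul_one] at hsum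
      have hcard' : (2:ℝ) ≤ F.card := by exact_mod_cast hcard
      have := mul_le_mul_of_nonneg_left hle1 (mul_nonneg hC0 (zero_le_one.trans hM1))
      linarith

end

section

open MeasureTheory Topology

/-- the step law -/
def Lm (P : Set ℕ) (ρ : ℝ) : Measure ℝ :=
  Measure.sum (fun p : P => ENNReal.ofReal (((p : ℕ) : ℝ) ^ (-ρ)) • Measure.dirac (Real.log (p : ℕ)))

lemma Lm_integral (P : Set ℕ) (ρ : ℝ) (f : ℝ → ℝ) :
    ∫ x, f x ∂(Lm P ρ) = ∑' p : P, ((p : ℕ) : ℝ) ^ (-ρ) * f (Real.log (p : ℕ)) := by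
  unfold Lm
  rw [integral_sum_dirac (fun i => ENNReal.ofReal_ne_top)]
  congr 1; ext p
  rw [ENNReal.toReal_ofReal (by positivity), smul_eq_mul]

lemma Lm_integrable (P : Set ℕ) (ρ : ℝ) (f : ℝ → ℝ)
    (h : Summable (fun p : P => ((p : ℕ) : ℝ) ^ (-ρ) * |f (Real.log (p : ℕ))|)) :
    Integrable f (Lm P ρ) := by
  unfold Lm
  rw [integrable_sum_dirac_iff (fun i => ENNReal.ofReal_ne_top)]
  refine h.congr fun p => ?_
  rw [ENNReal.toReal_ofReal (by positivity), Real.norm_eq_abs]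

lemma Lm_prob (P : Set ℕ) (ρ : ℝ) (hs : Summable (fun n : P => ((n : ℕ) : ℝ) ^ (-ρ)))
    (h1 : ∑' n : P, ((n : ℕ) : ℝ) ^ (-ρ) = 1) : IsProbabilityMeasure (Lm P ρ) := by
  constructor
  unfold Lm
  rw [Measure.sum_apply _ MeasurableSet.univ]
  simp only [Measure.smul_apply, measure_univ, smul_eq_mul, mul_one]
  rw [← ENNReal.ofReal_tsum_of_nonneg (fun p => by positivity) hs, h1, ENNReal.ofReal_one]

lemma Lm_ae (P : Set ℕ) (ρ : ℝ) (q : ℝ → Prop) (h : ∀ p ∈ P, q (Real.log (p : ℕ))) :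
    ∀ᵐ x ∂(Lm P ρ), q x := by
  unfold Lm
  rw [Measure.ae_sum_iff]
  intro p
  apply Measure.ae_smul_measure
  rw [ae_dirac_eq]
  exact h p p.2

lemma Lm_atom (P : Set ℕ) (hP : ∀ n ∈ P, 2 ≤ n) (ρ : ℝ) [IsProbabilityMeasure (Lm P ρ)]
    (p : ℕ) (hp : p ∈ P) : 0 < (Lm P ρ).real {Real.log p} := by
  have h0 : (0:ℝ) < p := by have := hP p hp; positivity
  have : 0 < Lm P ρ {Real.log p} := by
    refine lt_of_lt_of_le ?_ (Measure.le_sum (fun p : P =>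
      ENNReal.ofReal (((p : ℕ) : ℝ) ^ (-ρ)) • Measure.dirac (Real.log (p : ℕ))) ⟨p, hp⟩ _)
    simp
    positivity
  exact ENNReal.toReal_pos this.ne' (measure_ne_top _ _)

lemma summ_of_kappa (P : Set ℕ) (hP : ∀ n ∈ P, 2 ≤ n) (ρ : ℝ) (hρκ : kappa P < (ρ : EReal)) :
    Summable (fun n : P => ((n : ℕ) : ℝ) ^ (-ρ)) ∧
    Summable (fun n : P => ((n : ℕ) : ℝ) ^ (-ρ) * Real.log (n : ℕ)) ∧
    Summable (fun n : P => ((n : ℕ) : ℝ) ^ (-ρ) * Real.log (n : ℕ) ^ 2) := by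
  obtain ⟨_, ⟨r, rfl, hr⟩, hlt⟩ := sInf_lt_iff.1 hρκ
  have hrρ : r < ρ := by exact_mod_cast hlt
  set ε := (ρ - r) / 2 with hε
  have hε0 : 0 < ε := by rw [hε]; linarith
  have hn1 : ∀ n : P, (1:ℝ) ≤ ((n : ℕ) : ℝ) := fun n => by
    have := hP n n.2; exact_mod_cast (by omega : 1 ≤ (n:ℕ))
  have hs0 : Summable (fun n : P => ((n : ℕ) : ℝ) ^ (-ρ)) := by
    refine Summable.of_nonneg_of_le (fun n => by positivity) (fun n => ?_) hr
    exact Real.rpow_le_rpow_of_exponent_le (hn1 n) (by linarith)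
  have hs2 : Summable (fun n : P => ((n : ℕ) : ℝ) ^ (-ρ) * Real.log (n : ℕ) ^ 2) := by
    refine Summable.of_nonneg_of_le (fun n => by positivity) (fun n => ?_) (hr.mul_left ((ε^2)⁻¹))
    have hp : (0:ℝ) < ((n : ℕ) : ℝ) := zero_lt_one.trans_le (hn1 n)
    have h1 := Real.log_le_rpow_div hp.le hε0
    have h2 := Real.log_nonneg (hn1 n)
    have h3 : Real.log (n : ℕ) ^ 2 ≤ (((n:ℕ):ℝ) ^ ε / ε) ^ 2 := pow_le_pow_left₀ h2 h1 2
    calc ((n : ℕ) : ℝ) ^ (-ρ) * Real.log (n : ℕ) ^ 2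
        ≤ ((n : ℕ) : ℝ) ^ (-ρ) * (((n:ℕ):ℝ) ^ ε / ε) ^ 2 := by gcongr
      _ = (ε^2)⁻¹ * (((n : ℕ) : ℝ) ^ (-ρ) * (((n : ℕ) : ℝ) ^ ε * ((n : ℕ) : ℝ) ^ ε)) := by
          field_simp
      _ = (ε^2)⁻¹ * ((n : ℕ) : ℝ) ^ (-r) := by
          rw [← Real.rpow_add hp, ← Real.rpow_add hp]
          congr 2; rw [hε]; ring
  refine ⟨hs0, ?_, hs2⟩
  refine Summable.of_nonneg_of_le (fun n => ?_) (fun n => ?_) (hs0.add hs2)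
  · have h2 := Real.log_nonneg (hn1 n)
    positivity
  · have : (0:ℝ) ≤ ((n : ℕ) : ℝ) ^ (-ρ) := by positivity
    nlinarith [sq_nonneg (Real.log (n : ℕ) - 1), mul_nonneg this (sq_nonneg (Real.log (n : ℕ) - 1)),
      mul_nonneg this (sq_nonneg (Real.log (n : ℕ)))]

/-- moments of the step law -/
lemma Lm_moments (P : Set ℕ) (hP : ∀ n ∈ P, 2 ≤ n) (hP2 : P.Nontrivial) (ρ : ℝ)
    (hρκ : kappa P < (ρ : EReal)) [IsProbabilityMeasure (Lm P ρ)] :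
    MemLp (fun x : ℝ => x) 2 (Lm P ρ) ∧ Integrable (fun x : ℝ => x) (Lm P ρ) ∧
    ∫ x, x ∂(Lm P ρ) = - Pderiv1 P ρ ∧ 0 < ∫ x, x ∂(Lm P ρ) ∧
    ProbabilityTheory.variance (fun x : ℝ => x) (Lm P ρ) = Pderiv2 P ρ - (Pderiv1 P ρ) ^ 2 ∧
    0 < ProbabilityTheory.variance (fun x : ℝ => x) (Lm P ρ) := by
  obtain ⟨hs0, hs1, hs2⟩ := summ_of_kappa P hP ρ hρκ
  have hi2 : Integrable (fun x : ℝ => x ^ 2) (Lm P ρ) := by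
    apply Lm_integrable
    simpa [abs_pow] using hs2
  have hM : MemLp (fun x : ℝ => x) 2 (Lm P ρ) := by
    exact (memLp_two_iff_integrable_sq measurable_id.aestronglyMeasurable).2 hi2
  have hi1 : Integrable (fun x : ℝ => x) (Lm P ρ) := hM.integrable (by norm_num)
  have hm : ∫ x, x ∂(Lm P ρ) = - Pderiv1 P ρ := by
    rw [Lm_integral P ρ (fun x => x), Pderiv1, neg_neg]
  have hpos : ∀ᵐ x ∂(Lm P ρ), 0 < x := Lm_ae P ρ _ fun p hp =>
    Real.log_pos (by have := hP p hp; exact_mod_cast (by omega : 1 < p))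
  have hv : ProbabilityTheory.variance (fun x : ℝ => x) (Lm P ρ) = Pderiv2 P ρ - (Pderiv1 P ρ) ^ 2 := by
    rw [ProbabilityTheory.variance_eq_sub hM]
    congr 1
    · exact Lm_integral P ρ (fun x => x ^ 2)
    · rw [hm, neg_sq]
  refine ⟨hM, hi1, hm, ?_, hv, ?_⟩
  · rw [integral_pos_iff_support_of_nonneg_ae (hpos.mono fun x hx => hx.le) hi1]
    obtain ⟨a, ha, b, hb, hab⟩ := hP2
    have h2 := Lm_atom P hP ρ a ha
    refine lt_of_lt_of_le (ENNReal.toReal_pos_iff.1 h2).1 (measure_mono ?_)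
    intro x hx
    rw [Set.mem_singleton_iff] at hx
    rw [hx, Function.mem_support]
    exact (Real.log_pos (by have := hP a ha; exact_mod_cast (by omega : 1 < a))).ne'
  · refine lt_of_le_of_ne (ProbabilityTheory.variance_nonneg _ _) fun h0 => ?_
    have := ProbabilityTheory.ae_eq_integral_of_variance_eq_zero hM h0.symm
    obtain ⟨a, ha, b, hb, hab⟩ := hP2
    have key : ∀ p ∈ P, Real.log p = ∫ x, x ∂(Lm P ρ) := by
      intro p hp
      by_contra hne
      have h2 := Lm_atom P hP ρ p hp
      have h3 : Lm P ρ {Real.log p} = 0 := by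
        refine measure_mono_null ?_ (ae_iff.1 this)
        intro x hx
        rw [Set.mem_singleton_iff] at hx
        simpa [hx] using hne
      rw [measureReal_def, h3] at h2
      simp at h2
    have h1 := (key a ha).trans (key b hb).symm
    have ha2 := hP a ha
    have hb2 := hP b hb
    have := Real.log_injOn_pos (by simp; omega) (by simp; omega) h1
    exact hab (by exact_mod_cast this)

lemma floor_exp_sub (y : ℝ) (p : ℕ) (hp : 1 ≤ p) :
    ⌊Real.exp (y - Real.log p)⌋₊ = ⌊Real.exp y⌋₊ / p := by
  rw [Real.exp_sub, Real.exp_log (by exact_mod_cast hp), Nat.floor_div_natCast]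

/-- normalized tails -/
def hk (P : Set ℕ) (ρ : ℝ) (k : ℕ) (y : ℝ) : ℝ := Real.exp (-ρ * y) * Tl P k ⌊Real.exp y⌋₊

lemma hk_nonneg (P : Set ℕ) (ρ : ℝ) (k : ℕ) (y : ℝ) : 0 ≤ hk P ρ k y :=
  mul_nonneg (Real.exp_nonneg _) (Tl_nonneg _ _ _)

lemma floor_exp_neg (y : ℝ) (hy : y < 0) : ⌊Real.exp y⌋₊ = 0 := by
  rw [Nat.floor_eq_zero, Real.exp_lt_one_iff]; exact hy

lemma hk_neg (P : Set ℕ) (ρ : ℝ) (k : ℕ) (y : ℝ) (hy : y < 0) : hk P ρ k y = 0 := by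
  rw [hk, floor_exp_neg y hy, Tl_zero_right, mul_zero]

lemma hk_meas (P : Set ℕ) (ρ : ℝ) (k : ℕ) : Measurable (hk P ρ k) := by
  unfold hk
  refine Measurable.mul (by fun_prop) ?_
  exact (measurable_from_top (f := Tl P k)).comp (Nat.measurable_floor.comp Real.measurable_exp)

lemma hk_succ (P : Set ℕ) (hP : ∀ n ∈ P, 2 ≤ n) (ρ : ℝ) (k : ℕ) (y : ℝ) :
    hk P ρ (k + 1) y = ∫ x, hk P ρ k (y - x) ∂(Lm P ρ) := by
  classical
  rw [Lm_integral P ρ (fun x => hk P ρ k (y - x))]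
  set M := ⌊Real.exp y⌋₊ with hM
  have h1 : ∀ p : P, ((p : ℕ) : ℝ) ^ (-ρ) * hk P ρ k (y - Real.log (p : ℕ)) =
      Real.exp (-ρ * y) * Tl P k (M / p) := by
    intro p
    have hp := hP p p.2
    rw [hk, floor_exp_sub y p (by omega), ← hM, ← mul_assoc]
    congr 1
    rw [Real.rpow_def_of_pos (by positivity), ← Real.exp_add]
    congr 1; ring
  rw [tsum_congr h1, tsum_mul_left, hk, ← hM]
  congr 1
  rw [Tl_succ P hP k M (M + 1) (by omega), tsum_subtype P (fun p => Tl P k (M / p)),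
    tsum_eq_sum (s := Finset.range (M + 1)), Finset.sum_filter]
  · refine Finset.sum_congr rfl fun p _ => ?_
    rw [Set.indicator_apply]
  · intro p hp
    rw [Finset.mem_range, not_lt] at hp
    rw [Set.indicator_apply, Nat.div_eq_of_lt (by omega), Tl_zero_right, ite_self]

lemma hk_bound (P : Set ℕ) (hP : ∀ n ∈ P, 2 ≤ n) (hP2 : P.Nontrivial) (ρ : ℝ) (hρ : 0 < ρ)
    (hs : Summable (fun n : P => ((n : ℕ) : ℝ) ^ (-ρ)))
    (h1 : ∑' n : P, ((n : ℕ) : ℝ) ^ (-ρ) = 1) :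
    ∃ C : ℝ, ∀ k y, hk P ρ k y ≤ C := by
  obtain ⟨C, hC⟩ := Tl_bound P hP hP2 ρ hρ hs h1
  have hC0 : 0 ≤ C := by
    have := hC 1 le_rfl
    simp at this
    linarith [Tl_nonneg P 0 1]
  refine ⟨C, fun k y => ?_⟩
  rcases lt_or_ge y 0 with hy | hy
  · rw [hk_neg _ _ _ _ hy]; exact hC0
  · have hM : 1 ≤ ⌊Real.exp y⌋₊ := by
      rw [Nat.one_le_floor_iff]; exact Real.one_le_exp hy
    have h2 := (Tl_le P hP k _).trans (hC _ hM)
    have h3 : (⌊Real.exp y⌋₊ : ℝ) ^ ρ ≤ Real.exp (ρ * y) := by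
      rw [mul_comm, Real.exp_mul]
      exact Real.rpow_le_rpow (by positivity) (Nat.floor_le (Real.exp_nonneg _)) hρ.le
    have h4 : Tl P k ⌊Real.exp y⌋₊ ≤ C * Real.exp (ρ * y) := by nlinarith
    calc hk P ρ k y ≤ Real.exp (-ρ * y) * (C * Real.exp (ρ * y)) :=
          mul_le_mul_of_nonneg_left h4 (Real.exp_nonneg _)
      _ = C * (Real.exp (-ρ * y) * Real.exp (ρ * y)) := by ring
      _ = C := by rw [← Real.exp_add]; simp

lemma hk_Ren (P : Set ℕ) (hP : ∀ n ∈ P, 2 ≤ n) (hP2 : P.Nontrivial) (ρ : ℝ) (hρ : 0 < ρ)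
    (hρκ : kappa P < (ρ : EReal)) [IsProbabilityMeasure (Lm P ρ)] (C : ℝ)
    (hC : ∀ k y, hk P ρ k y ≤ C) : Ren (Lm P ρ) (hk P ρ 0) ρ C where
  rho := hρ
  meas := hk_meas P ρ 0
  nonneg := hk_nonneg P ρ 0
  le := hC 0
  neg := hk_neg P ρ 0
  eqn := by
    intro y
    rw [← hk_succ P hP ρ 0 y]
    unfold hk
    rw [Tl_split P hP 1 _, mul_add]
    congr 1
    simp only [Finset.range_one, Finset.sum_singleton, cnt_zero_left, Nat.one_le_floor_iff,
      Real.one_le_exp_iff]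
    split_ifs <;> simp
  mono := by
    intro y δ hδ
    unfold hk
    rw [← mul_assoc, ← Real.exp_add, show -ρ * δ + -ρ * y = -ρ * (y + δ) by ring]
    gcongr
    exact Tl_mono P hP 0 (Nat.floor_mono (Real.exp_le_exp.2 (by linarith)))
  pos := Lm_ae P ρ _ fun p hp =>
    Real.log_pos (by have := hP p hp; exact_mod_cast (by omega : 1 < p))
  int := (Lm_moments P hP hP2 ρ hρκ).2.1

lemma cnt_step (P : Set ℕ) (hP : ∀ n ∈ P, 2 ≤ n) (d : ℝ) (hd : 0 < d)
    (hl : ∀ p ∈ P, ∃ k : ℤ, Real.log (p : ℕ) = d * k) (δ : ℝ) (h0 : 0 ≤ δ) (h1 : δ < d) (m : ℕ) :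
    ∀ k : ℤ, cnt P m ⌊Real.exp (d * k + δ)⌋₊ = cnt P m ⌊Real.exp (d * k)⌋₊ := by
  classical
  induction m with
  | zero =>
    intro k
    rw [cnt_zero_left, cnt_zero_left]
    simp only [Nat.one_le_floor_iff, Real.one_le_exp_iff]
    congr 1
    apply propext
    constructor
    · intro h
      by_contra hlt
      have hk0 : (k:ℝ) < 0 := by
        by_contra hh
        exact hlt (mul_nonneg hd.le (not_lt.1 hh))
      have hk1 : (k:ℝ) ≤ -1 := by
        have : k < 0 := by exact_mod_cast hk0
        exact_mod_cast (by omega : k ≤ -1)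
      nlinarith
    · intro h; linarith
  | succ m ih =>
    intro k
    set K := ⌊Real.exp (d * k + δ)⌋₊ + ⌊Real.exp (d * k)⌋₊ + 1
    rw [cnt_succ P hP m _ K (by omega), cnt_succ P hP m _ K (by omega)]
    refine Finset.sum_congr rfl fun p hp => ?_
    have hpP := (Finset.mem_filter.1 hp).2
    have hp2 := hP p hpP
    obtain ⟨j, hj⟩ := hl p hpP
    rw [← floor_exp_sub _ p (by omega), ← floor_exp_sub _ p (by omega), hj]
    have := ih (k - j)
    push_cast at this
    rw [show d * (k:ℝ) + δ - d * j = d * (k - j) + δ by ring,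
      show d * (k:ℝ) - d * j = d * (k - j) by ring]
    exact this

lemma hk_step (P : Set ℕ) (hP : ∀ n ∈ P, 2 ≤ n) (ρ : ℝ) [IsProbabilityMeasure (Lm P ρ)] :
    ∀ d > 0, (∀ x, 0 < (Lm P ρ).real {x} → ∃ k : ℤ, x = d * k) →
      ∀ (k : ℤ) (δ : ℝ), 0 ≤ δ → δ < d →
        hk P ρ 0 (d * k + δ) = Real.exp (-ρ * δ) * hk P ρ 0 (d * k) := by
  intro d hd hl k δ h0 h1
  have hc := fun m => cnt_step P hP d hd (fun p hp => hl _ (Lm_atom P hP ρ p hp)) δ h0 h1 m k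
  unfold hk Tl
  simp only [hc]
  rw [← mul_assoc, ← Real.exp_add]
  congr 2; ring

lemma hk_SS (P : Set ℕ) (hP : ∀ n ∈ P, 2 ≤ n) (ρ : ℝ) [IsProbabilityMeasure (Lm P ρ)] (C : ℝ)
    (hC : ∀ k y, hk P ρ k y ≤ C) (k : ℕ) :
    ∀ y, hk P ρ k y = ∫ ω, hk P ρ 0 (y - SS k ω) ∂(QQ (Lm P ρ)) := by
  induction k with
  | zero => intro y; simp [SS]
  | succ k ih =>
    intro y
    rw [hk_succ P hP, QQ_succ _ _ (hk_meas P ρ 0) C (fun y => by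
      rw [abs_of_nonneg (hk_nonneg _ _ _ _)]; exact hC 0 y)]
    congr 1; ext x
    exact ih _

/-- limit of tail ratios -/
lemma tails (P : Set ℕ) (hP : ∀ n ∈ P, 2 ≤ n) (hP2 : P.Nontrivial) (ρ : ℝ) (hρ : 0 < ρ)
    (hρκ : kappa P < (ρ : EReal)) (hρ1 : Pval P ρ = 1) (v : NNReal)
    (hv : (v : ℝ) = Pderiv2 P ρ - (Pderiv1 P ρ) ^ 2) (k : ℕ → ℕ) (hkk : Tendsto k atTop atTop) (τ0 : ℝ)
    (hτ : Tendsto (fun N : ℕ => (Real.sqrt (k N))⁻¹ * (Real.log N - k N * (-Pderiv1 P ρ))) atTop (𝓝 τ0)) :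
    Tendsto (fun N : ℕ => Tl P (k N) N / Tl P 0 N) atTop
      (𝓝 ((ProbabilityTheory.gaussianReal 0 v).real (Set.Iic τ0))) := by
  have hs := (summ_of_kappa P hP ρ hρκ).1
  have := Lm_prob P ρ hs hρ1
  obtain ⟨hM, hi, hm, hm0, hvar, hvar0⟩ := Lm_moments P hP hP2 ρ hρκ
  obtain ⟨C, hC⟩ := hk_bound P hP hP2 ρ hρ hs hρ1
  have H := hk_Ren P hP hP2 ρ hρ hρκ C hC
  obtain ⟨a, ha⟩ := hP2.nonempty
  obtain ⟨c, c0, c1, hc0, hcl, hcu, hcG, hc⟩ := H.main (hk_step P hP ρ)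
    ⟨Real.log a, (Real.log_pos (by have := hP a ha; exact_mod_cast (by omega : 1 < a))).ne',
      Lm_atom P hP ρ a ha⟩
  have := tail_limit H hM v (hv.trans hvar.symm) (by
      rintro rfl
      rw [hvar, ← hv] at hvar0
      simp at hvar0) c c0 c1 hc0 hcl hcu hcG hc
    (Lm_ae P ρ _ fun p hp => Lm_atom P hP ρ p hp) k hkk (fun N : ℕ => Real.log N)
    (Real.tendsto_log_atTop.comp tendsto_natCast_atTop_atTop) τ0 (by rw [hm]; exact hτ)
  refine this.congr' ?_
  filter_upwards [eventually_ge_atTop 1] with N hN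
  rw [← hk_SS P hP ρ C hC]
  unfold hk
  rw [Real.exp_log (by exact_mod_cast hN), Nat.floor_natCast,
    mul_div_mul_left _ _ (Real.exp_ne_zero _)]

end

section

open MeasureTheory Topology

lemma gauss_ident (v : NNReal) (hv : v ≠ 0) (x : ℝ) :
    1 - (ProbabilityTheory.gaussianReal 0 v).real (Set.Iic (-(Real.sqrt v * x))) =
      (Real.sqrt (2 * Real.pi))⁻¹ * ∫ t in Set.Iic x, Real.exp (-(t ^ 2) / 2) := by
  have hs : 0 < Real.sqrt v := Real.sqrt_pos.2 (by positivity)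
  have h1 : ProbabilityTheory.gaussianReal 0 v =
      (ProbabilityTheory.gaussianReal 0 1).map (fun t => (-Real.sqrt v) * t) := by
    rw [ProbabilityTheory.gaussianReal_map_const_mul]
    congr 1
    · simp
    · ext; simp
  have h2 : (ProbabilityTheory.gaussianReal 0 v).real (Set.Iic (-(Real.sqrt v * x))) =
      (ProbabilityTheory.gaussianReal 0 1).real (Set.Ici x) := by
    rw [h1, map_measureReal_apply (by fun_prop) measurableSet_Iic]
    congr 1
    ext t
    simp only [Set.mem_preimage, Set.mem_Iic, Set.mem_Ici, neg_mul, neg_le_neg_iff]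
    exact mul_le_mul_iff_right₀ hs
  rw [h2, ← probReal_compl_eq_one_sub measurableSet_Ici, Set.compl_Ici]
  have := ProbabilityTheory.nullSingletonClass_gaussianReal (μ := 0) (v := 1) one_ne_zero
  rw [measureReal_congr (Iio_ae_eq_Iic (a := x)), measureReal_def,
    ProbabilityTheory.gaussianReal_apply_eq_integral _ one_ne_zero, ENNReal.toReal_ofReal
      (integral_nonneg fun t => ProbabilityTheory.gaussianPDFReal_nonneg _ _ _),
    ← integral_const_mul]
  congr 1; ext t
  simp [ProbabilityTheory.gaussianPDFReal_def]

lemma Acum_eq (P : Set ℕ) (hP : ∀ n ∈ P, 2 ≤ n) (N : ℕ) : Acum P N = Tl P 0 N := by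
  unfold Acum aTot Tl
  rw [← Summable.tsum_finsetSum]
  · congr 1; ext m
    simp [cnt]
  · intro n hn
    rw [Finset.mem_Icc] at hn
    refine summable_of_ne_finset_zero (s := Finset.range n) fun m hm => ?_
    have h0 := cnt_eq_zero' P hP m n (by simpa using hm)
    unfold cnt at h0
    rw [Finset.sum_eq_zero_iff] at h0
    rw [h0 n (by simp [hn.1])]; simp

lemma Tl_pos (P : Set ℕ) (hP : ∀ n ∈ P, 2 ≤ n) (N : ℕ) (hN : 1 ≤ N) : 0 < Tl P 0 N := by
  rw [Tl_split P hP 1]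
  simp only [Finset.range_one, Finset.sum_singleton, cnt_zero_left, if_pos hN, Nat.cast_one]
  linarith [Tl_nonneg P 1 N]

lemma num_eq (P : Set ℕ) (hP : ∀ n ∈ P, 2 ≤ n) (N : ℕ) (B : ℝ) (hB : 0 ≤ B) :
    (∑' m : ℕ, if (m : ℝ) ≤ B then (∑ n ∈ Finset.Icc 1 N, (af P m n : ℝ)) else 0) =
      Tl P 0 N - Tl P (⌊B⌋₊ + 1) N := by
  rw [Tl_split P hP (⌊B⌋₊ + 1) N, add_sub_cancel_right, tsum_eq_sum (s := Finset.range (⌊B⌋₊ + 1))]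
  · refine Finset.sum_congr rfl fun m hm => ?_
    rw [if_pos]
    · simp [cnt]
    · rw [Finset.mem_range, Nat.lt_succ_iff] at hm
      exact (Nat.le_floor_iff hB).1 hm
  · intro m hm
    rw [if_neg]
    intro h
    apply hm
    rw [Finset.mem_range, Nat.lt_succ_iff]
    exact (Nat.le_floor_iff hB).2 h

lemma tau_lim (μ ν σ v x : ℝ) (hμ : 0 < μ) (hν : ν = μ⁻¹) (hσ0 : 0 ≤ σ) (hv : 0 ≤ v) (hσ : σ ^ 2 = μ ^ 3 * v)
    (L : ℕ → ℝ) (hL : Tendsto L atTop atTop) :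
    Tendsto (fun N => μ * L N + x * (σ * Real.sqrt (L N))) atTop atTop ∧
    Tendsto (fun N => (Real.sqrt ((⌊μ * L N + x * (σ * Real.sqrt (L N))⌋₊ + 1 : ℕ) : ℝ))⁻¹ *
      (L N - (⌊μ * L N + x * (σ * Real.sqrt (L N))⌋₊ + 1 : ℕ) * ν)) atTop
      (𝓝 (-(Real.sqrt v * x))) := by
  set B : ℕ → ℝ := fun N => μ * L N + x * (σ * Real.sqrt (L N)) with hB
  have hs : Tendsto (fun N => Real.sqrt (L N)) atTop atTop := Real.tendsto_sqrt_atTop.comp hL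
  have hsi : Tendsto (fun N => (Real.sqrt (L N))⁻¹) atTop (𝓝 0) := tendsto_inv_atTop_zero.comp hs
  have hLp : ∀ᶠ N in atTop, 0 < L N := hL.eventually_gt_atTop 0
  have hBt : Tendsto B atTop atTop := by
    have h1 : Tendsto (fun N => μ * Real.sqrt (L N) + x * σ) atTop atTop :=
      tendsto_atTop_add_const_right _ _ (hs.const_mul_atTop hμ)
    refine (hs.atTop_mul_atTop₀ h1).congr' ?_
    filter_upwards [hLp] with N hN
    have := Real.mul_self_sqrt hN.le
    simp only [hB]
    linear_combination μ * this
  refine ⟨hBt, ?_⟩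
  set k : ℕ → ℝ := fun N => ((⌊B N⌋₊ + 1 : ℕ) : ℝ) with hk
  have hθ : ∀ᶠ N in atTop, |k N - B N| ≤ 1 := by
    filter_upwards [hBt.eventually_ge_atTop 0] with N hN
    have h1 := Nat.floor_le hN
    have h2 := Nat.lt_floor_add_one (B N)
    simp only [hk]; push_cast
    rw [abs_le]; constructor <;> linarith
  have hθs : Tendsto (fun N => (k N - B N) * (Real.sqrt (L N))⁻¹) atTop (𝓝 0) := by
    refine squeeze_zero_norm' ?_ hsi
    filter_upwards [hθ] with N hN
    rw [norm_mul, Real.norm_eq_abs, Real.norm_eq_abs, abs_of_nonneg (by positivity : (0:ℝ) ≤ (Real.sqrt (L N))⁻¹)]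
    exact mul_le_of_le_one_left (by positivity) hN
  have hkL : Tendsto (fun N => k N / L N) atTop (𝓝 μ) := by
    have h1 := ((hsi.const_mul (x * σ)).const_add μ).add (hθs.mul hsi)
    simp only [mul_zero, add_zero] at h1
    refine h1.congr' ?_
    filter_upwards [hLp] with N hN
    have h3 : Real.sqrt (L N) ≠ 0 := (Real.sqrt_pos.2 hN).ne'
    have h4 := Real.sq_sqrt hN.le
    have h5 : k N / L N = k N / (Real.sqrt (L N)) ^ 2 := by rw [h4]
    rw [h5]
    field_simp
    simp only [hB]
    linear_combination μ * h4
  have hsk : Tendsto (fun N => (Real.sqrt (k N / L N))⁻¹) atTop (𝓝 (Real.sqrt μ)⁻¹) :=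
    ((Real.continuous_sqrt.tendsto μ).comp hkL).inv₀ (Real.sqrt_pos.2 hμ).ne'
  have hfin := hsk.mul (((hθs.const_mul (-ν))).const_add (-(ν * x * σ)))
  have hlim : (Real.sqrt μ)⁻¹ * (-(ν * x * σ) + -ν * 0) = -(Real.sqrt v * x) := by
    have h1 : σ = μ * Real.sqrt μ * Real.sqrt v := by
      have h2 : 0 ≤ μ * Real.sqrt μ * Real.sqrt v := by positivity
      rw [← sq_eq_sq₀ hσ0 h2, hσ, mul_pow, mul_pow, Real.sq_sqrt hμ.le, Real.sq_sqrt hv]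
      ring
    have h3 : Real.sqrt μ ≠ 0 := (Real.sqrt_pos.2 hμ).ne'
    rw [h1, hν]
    field_simp
    ring
  rw [hlim] at hfin
  refine hfin.congr' ?_
  filter_upwards [hLp] with N hN
  have h3 : Real.sqrt (L N) ≠ 0 := (Real.sqrt_pos.2 hN).ne'
  have hkp : 0 < k N := by simp only [hk]; positivity
  have h4 : Real.sqrt (k N) ≠ 0 := (Real.sqrt_pos.2 hkp).ne'
  have h5 := Real.sq_sqrt hN.le
  change _ = (Real.sqrt (k N))⁻¹ * (L N - k N * ν)
  rw [Real.sqrt_div hkp.le, hν]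
  field_simp
  simp only [hB]
  linear_combination 0 * h5

end

/-- **Asymptotic normality of the number of factors in random ordered factorizations.**
Under the assumptions of the theorem, for every real `x`,
`P(Y_N ≤ μ log N + x σ √(log N)) → (1/√(2π)) ∫_{-∞}^x e^{-t²/2} dt` as `N → ∞`. -/
theorem ordered_factorizations_asymptotically_normal
    (P : Set ℕ) (hP : ∀ n ∈ P, 2 ≤ n) (hP2 : P.Nontrivial)
    (hκ : 1 < PvalE P (kappa P))
    (ρ : ℝ) (hρ0 : 0 < ρ) (hρκ : kappa P < (ρ : EReal)) (hρ1 : Pval P ρ = 1)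
    (μ σ : ℝ) (hμ : μ = -1 / Pderiv1 P ρ)
    (hσ0 : 0 ≤ σ) (hσ : σ ^ 2 = μ ^ 3 * Pderiv2 P ρ - μ) :
    ∀ x : ℝ,
      Tendsto (fun N : ℕ =>
          (∑' m : ℕ,
            if (m : ℝ) ≤ μ * Real.log N + x * (σ * Real.sqrt (Real.log N)) then
              (∑ n ∈ Finset.Icc 1 N, (af P m n : ℝ)) else 0) / Acum P N)
        atTop
        (nhds ((Real.sqrt (2 * Real.pi))⁻¹ * ∫ t in Set.Iic x, Real.exp (-(t ^ 2) / 2))) := by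
  intro x
  have hs := (summ_of_kappa P hP ρ hρκ).1
  have := Lm_prob P ρ hs hρ1
  obtain ⟨hM, hi, hm, hm0, hvar, hvar0⟩ := Lm_moments P hP hP2 ρ hρκ
  rw [hm] at hm0
  rw [hvar] at hvar0
  set v : NNReal := ⟨Pderiv2 P ρ - (Pderiv1 P ρ) ^ 2, hvar0.le⟩ with hv
  have hv' : (v : ℝ) = Pderiv2 P ρ - (Pderiv1 P ρ) ^ 2 := rfl
  have hv0 : v ≠ 0 := by
    intro h
    rw [h] at hv'
    rw [← hv'] at hvar0
    simp at hvar0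
  have hμ' : μ = (-Pderiv1 P ρ)⁻¹ := by rw [hμ, inv_neg, ← one_div, neg_div]
  have hμ0 : 0 < μ := by rw [hμ']; positivity
  have hν : -Pderiv1 P ρ = μ⁻¹ := by rw [hμ', inv_inv]
  have hσ' : σ ^ 2 = μ ^ 3 * v := by
    rw [hσ, hv', ← neg_sq (Pderiv1 P ρ), hν]
    field_simp
  obtain ⟨hB, hτ⟩ := tau_lim μ (-Pderiv1 P ρ) σ v x hμ0 hν hσ0 v.2 hσ'
    (fun N : ℕ => Real.log N) (Real.tendsto_log_atTop.comp tendsto_natCast_atTop_atTop)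
  have hT := tails P hP hP2 ρ hρ0 hρκ hρ1 v hv' _
    ((tendsto_add_atTop_nat 1).comp (tendsto_nat_floor_atTop.comp hB)) _ hτ
  have hT2 := hT.const_sub 1
  rw [gauss_ident v hv0 x] at hT2
  refine hT2.congr' ?_
  filter_upwards [hB.eventually_ge_atTop 0, eventually_ge_atTop 1] with N hN hN1
  rw [num_eq P hP N _ hN, Acum_eq P hP, sub_div, div_self (Tl_pos P hP N hN1).ne']
  rfl
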